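/- Let S₂(X) denote the number of cube-free integers d with |d| ≤ X such that the elliptic curve W_d : y² = x³ − 432d² over ℚ has Mordell–Weil rank at least 2. Then S₂(X) ≫ X^{1/3}: there exist a constant c > 0 and X₀ such that S₂(X) ≥ c·X^{1/3} for all X ≥ X₀. -/

import Mathlib

open WeierstrassCurve

/-- An integer is cube-free if no prime cube divides it. -/
def Cubefree (d : ℤ) : Prop := ∀ p : ℤ, Prime p → ¬ p ^ 3 ∣ d

/-- The elliptic curve `W_d : y² = x³ - 432d²` over `ℚ`, isomorphic to `X³ + Y³ = d`. -/
def W12 (d : ℤ) : Affine ℚ :=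
  { a₁ := 0, a₂ := 0, a₃ := 0, a₄ := 0, a₆ := -432 * (d : ℚ) ^ 2 }

/-- `S₂(X)`: the number of cube-free integers `d` with `|d| ≤ X` such that `W_d(ℚ)` has
rank at least 2. -/
noncomputable def S₂ (X : ℝ) : ℕ :=
  {d : ℤ | Cubefree d ∧ (|d| : ℝ) ≤ X ∧ 2 ≤ Module.rank ℤ (W12 d).Point}.ncard

/-!
Homogenising the paper's polynomial `k(T)` gives `63 F(a, b)` for a binary sextic form `F` that is a
product of three quadratic forms. The curve `X³ + Y³ = 63 F(a, b)` carries a polynomial point and,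
`F` being symmetric, its mirror image under exchanging `a` and `b`.

The two points are independent already modulo `3`. If `c` is a square root of `m` in `ℚ_p`, the
valuation of `y - c` modulo `3` is a homomorphism on `y² = x³ + m`. For a prime `p` that divides
the third quadratic factor, whose value is cube-free, it kills the mirror image but not the point
itself; a prime dividing the first factor does the opposite. As the curve has no `3`-torsion, the
rank is at least `2`.

It remains to find `≫ N²` values of `F` on pairs of size `≪ N`. A sieve over a box of pairs in a
fixed residue class, for which `F` is prime to `2 * 3 * 5 * 7`, leaves a positive proportion that
are coprime, have cube-free quadratic factors, and have a value `d` for which the primes `p ≤ y`,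
where `N = y ^ 100`, have a small product. Few pairs share the same `d`: modulo each of the
boundedly many primes `p > y` dividing `d`, the ratio `a / b` is one of at most six roots of `F`,
and these primes have so large a product that the residues determine the pair.
-/

section LinearIndependence

variable {ι G V : Type*} {ℓ : ℕ} [Fact ℓ.Prime] [AddCommGroup G] [AddCommGroup V]
  [Module (ZMod ℓ) V]

lemma dvd_of_sum_zsmul_eq_zero {x : ι → G} (f : G →+ V)
    (hf : LinearIndependent (ZMod ℓ) (f ∘ x)) {s : Finset ι} {g : ι → ℤ}
    (hg : ∑ i ∈ s, g i • x i = 0) : ∀ i ∈ s, (ℓ : ℤ) ∣ g i := by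
  intro i hi
  rw [← ZMod.intCast_zmod_eq_zero_iff_dvd]
  refine linearIndependent_iff'.1 hf s (fun i => (g i : ZMod ℓ)) ?_ i hi
  simpa [Int.cast_smul_eq_zsmul] using congrArg f hg

lemma linearIndependent_int_of_torsionFree {x : ι → G} (f : G →+ V)
    (hf : LinearIndependent (ZMod ℓ) (f ∘ x)) (htor : ∀ P : G, ℓ • P = 0 → P = 0) :
    LinearIndependent ℤ x := by
  rw [linearIndependent_iff']
  intro s g hg i hi
  have hpow : ∀ (n : ℕ) (g : ι → ℤ), ∑ i ∈ s, g i • x i = 0 → (ℓ : ℤ) ^ n ∣ g i := by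
    intro n
    induction n with
    | zero => simp
    | succ n ih =>
      intro g hg
      choose! g' hg' using dvd_of_sum_zsmul_eq_zero f hf hg
      have hg'0 : ∑ i ∈ s, g' i • x i = 0 := by
        apply htor
        rw [Finset.smul_sum, ← hg]
        refine Finset.sum_congr rfl fun j hj => ?_
        rw [hg' j hj, mul_smul, natCast_zsmul]
      rw [hg' i hi, pow_succ']
      exact mul_dvd_mul_left _ (ih g' hg'0)
  by_contra hne
  have hfin : FiniteMultiplicity (ℓ : ℤ) (g i) :=
    Int.finiteMultiplicity_iff.2 ⟨by simpa using (Fact.out : ℓ.Prime).ne_one, hne⟩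
  obtain ⟨n, hn⟩ := hfin
  exact hn (hpow (n + 1) g hg)

end LinearIndependence

section MordellCurve

variable {K : Type*} [Field K] {k : K}

/-- The Mordell curve `y² = x³ + k`. -/
@[simps]
def mordellCurve (k : K) : Affine K :=
  { a₁ := 0, a₂ := 0, a₃ := 0, a₄ := 0, a₆ := k }

lemma mordellCurve_equation_iff {x y : K} :
    (mordellCurve k).Equation x y ↔ y ^ 2 = x ^ 3 + k := by
  simp [Affine.equation_iff, mordellCurve]

lemma mordellCurve_negY (x y : K) : (mordellCurve k).negY x y = -y := by
  simp [Affine.negY, mordellCurve]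

lemma mordellCurve_nonsingular_iff (hk : 432 * k ^ 2 ≠ 0) {x y : K} :
    (mordellCurve k).Nonsingular x y ↔ y ^ 2 = x ^ 3 + k := by
  rw [← mordellCurve_equation_iff]
  refine (Affine.equation_iff_nonsingular_of_Δ_ne_zero ?_).symm
  contrapose! hk
  simp only [Δ, b₂, b₄, b₆, b₈, mordellCurve] at hk
  linear_combination -hk

variable [DecidableEq K]

lemma eq_zero_or_cube_eq_of_three_smul_eq_zero (h3 : (3 : K) ≠ 0) {x y : K}
    {h : (mordellCurve k).Nonsingular x y} (hP : 3 • Affine.Point.some x y h = 0) :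
    x = 0 ∨ x ^ 3 = -4 * k := by
  have hdbl : Affine.Point.some x y h + Affine.Point.some x y h = -Affine.Point.some x y h := by
    rw [← add_eq_zero_iff_eq_neg, ← hP]; abel
  have hy : y ≠ (mordellCurve k).negY x y := by
    intro hy
    rw [Affine.Point.add_self_of_Y_eq hy] at hdbl
    exact Affine.Point.some_ne_zero h (neg_eq_zero.1 hdbl.symm)
  rw [Affine.Point.add_self_of_Y_ne hy, Affine.Point.neg_some] at hdbl
  have hX := (Affine.Point.some.inj hdbl).1
  rw [Affine.slope_of_Y_ne rfl hy] at hX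
  rw [mordellCurve_negY] at hX hy
  have h2y : 2 * y ≠ 0 := by rwa [two_mul, ← sub_neg_eq_add, sub_ne_zero]
  have htangent : (3 * x ^ 2) ^ 2 = 3 * x * (2 * y) ^ 2 := by
    rw [← div_eq_iff (pow_ne_zero 2 h2y), ← div_pow]
    simp only [Affine.addX, mordellCurve_a₁, mordellCurve_a₂, mordellCurve_a₄] at hX
    ring_nf at hX ⊢
    linear_combination hX
  have hcurve : y ^ 2 = x ^ 3 + k := mordellCurve_equation_iff.1 h.1
  have hprod : 3 * (x * (x ^ 3 + 4 * k)) = 0 := by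
    linear_combination -htangent - 12 * x * hcurve
  rcases mul_eq_zero.1 ((mul_eq_zero.1 hprod).resolve_left h3) with hx | hx
  · exact Or.inl hx
  · exact Or.inr (by linear_combination hx)

end MordellCurve

section CubicDescent

variable {K L A : Type*} [Field K] [Field L] [Algebra K L] [AddCommGroup A] {k : K} {c : L}

lemma prod_line_sub_eq_cube {x₁ x₂ x₃ l m : L}
    (h : ∀ t : L, t ^ 3 + c ^ 2 - (l * t + m) ^ 2 = (t - x₁) * (t - x₂) * (t - x₃)) :
    (l * x₁ + m - c) * (l * x₂ + m - c) * (l * x₃ + m - c) = (m - c) ^ 3 := by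
  rcases eq_or_ne l 0 with rfl | hl
  · ring
  -- The line takes the value `c` at `t = (c - m) / l`, where the cubic reduces to `t³`.
  have ht := h ((c - m) / l)
  rw [mul_div_cancel₀ _ hl, sub_add_cancel, add_sub_cancel_right] at ht
  field_simp at ht
  linear_combination ht

/-- The descent map sending a point `(x, y)` of `y² = x³ + c²` to the class `v (y - c)`; it is
additive as soon as `v` turns products of nonzero elements into sums in an abelian group of
exponent three. The square root `c` of `k` lives in an extension `L` of the base field. -/
def cubicDescent (v : L → A) (c : L) : (mordellCurve k).Point → A
  | .zero => 0
  | .some _ y _ => v (algebraMap K L y - c)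

variable {v : L → A}

lemma algebraMap_ne_of_not_isSquare (hk : ¬ IsSquare k) (hc : algebraMap K L k = c ^ 2) (y : K) :
    algebraMap K L y - c ≠ 0 := by
  intro h
  refine hk ⟨y, (algebraMap K L).injective ?_⟩
  rw [hc, ← sub_eq_zero.1 h, map_mul, sq]

lemma map_cube_eq_zero (hA : ∀ a : A, 3 • a = 0)
    (hv : ∀ {a b : L}, a ≠ 0 → b ≠ 0 → v (a * b) = v a + v b) {a : L} (ha : a ≠ 0) :
    v (a ^ 3) = 0 := by
  rw [← hA (v a), pow_succ, sq, hv (mul_ne_zero ha ha) ha, hv ha ha]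
  abel

lemma map_sub_add_map_neg_sub (hk : ¬ IsSquare k) (hc : algebraMap K L k = c ^ 2)
    (hA : ∀ a : A, 3 • a = 0) (hv : ∀ {a b : L}, a ≠ 0 → b ≠ 0 → v (a * b) = v a + v b)
    {x y : K} (hxy : y ^ 2 = x ^ 3 + k) :
    v (algebraMap K L y - c) + v (algebraMap K L (-y) - c) = 0 := by
  have hy := algebraMap_ne_of_not_isSquare hk hc y
  have hy' := algebraMap_ne_of_not_isSquare hk hc (-y)
  have hprod : (algebraMap K L y - c) * (algebraMap K L (-y) - c) = (-algebraMap K L x) ^ 3 := by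
    have h := congrArg (algebraMap K L) hxy
    simp only [map_pow, map_add, hc, map_neg] at h ⊢
    linear_combination -h
  have hx : -algebraMap K L x ≠ 0 := by
    rw [← pow_ne_zero_iff three_ne_zero, ← hprod]
    exact mul_ne_zero hy hy'
  rw [← hv hy hy', hprod, map_cube_eq_zero hA hv hx]

variable [DecidableEq K]

lemma line_slope_apply {W : Affine K} {x₁ y₁ x₂ y₂ : K} (h₁ : W.Equation x₁ y₁)
    (h₂ : W.Equation x₂ y₂) (hxy : ¬(x₁ = x₂ ∧ y₁ = W.negY x₂ y₂)) :
    W.slope x₁ x₂ y₁ y₂ * (x₂ - x₁) + y₁ = y₂ := by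
  by_cases hx : x₁ = x₂
  · rw [Affine.Y_eq_of_Y_ne h₁ h₂ hx (fun h => hxy ⟨hx, h⟩), hx]; ring
  · rw [Affine.slope_of_X_ne hx]
    have : x₁ - x₂ ≠ 0 := sub_ne_zero.2 hx
    field_simp
    ring

lemma prod_slope_sub_eq_cube (hc : algebraMap K L k = c ^ 2) {x₁ y₁ x₂ y₂ : K}
    (h₁ : (mordellCurve k).Equation x₁ y₁) (h₂ : (mordellCurve k).Equation x₂ y₂)
    (hxy : ¬(x₁ = x₂ ∧ y₁ = (mordellCurve k).negY x₂ y₂)) :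
    let l := (mordellCurve k).slope x₁ x₂ y₁ y₂
    (algebraMap K L y₁ - c) * (algebraMap K L y₂ - c) *
      (algebraMap K L ((mordellCurve k).negAddY x₁ x₂ y₁ l) - c) =
      (algebraMap K L (y₁ - l * x₁) - c) ^ 3 := by
  intro l
  have hline := line_slope_apply h₁ h₂ hxy
  have hpoly := Affine.addPolynomial_slope h₁ h₂ hxy
  have h := prod_line_sub_eq_cube (x₁ := algebraMap K L x₁) (x₂ := algebraMap K L x₂)
    (x₃ := algebraMap K L ((mordellCurve k).addX x₁ x₂ l)) (l := algebraMap K L l)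
    (m := algebraMap K L (y₁ - l * x₁)) (c := c) fun t => by
      have ht := congrArg (Polynomial.aeval t) hpoly
      simp only [Affine.addPolynomial, Affine.linePolynomial, Affine.polynomial, mordellCurve_a₁,
        mordellCurve_a₂, mordellCurve_a₃, mordellCurve_a₄, mordellCurve_a₆, map_zero, zero_mul,
        add_zero, map_add, map_sub, map_mul, map_neg, map_pow, Polynomial.eval_sub,
        Polynomial.eval_add, Polynomial.eval_pow, Polynomial.eval_X, Polynomial.eval_C,
        Polynomial.aeval_X, Polynomial.aeval_C, hc] at ht
      simp only [map_sub, map_mul]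
      linear_combination -ht
  have hx₁ : l * x₁ + (y₁ - l * x₁) = y₁ := by ring
  have hx₂ : l * x₂ + (y₁ - l * x₁) = y₂ := by rw [← hline]; ring
  have hx₃ : l * (mordellCurve k).addX x₁ x₂ l + (y₁ - l * x₁) =
      (mordellCurve k).negAddY x₁ x₂ y₁ l := by rw [Affine.negAddY]; ring
  simpa only [← map_mul, ← map_add, hx₁, hx₂, hx₃] using h

lemma cubicDescent_add (hk : ¬ IsSquare k) (hc : algebraMap K L k = c ^ 2)
    (hA : ∀ a : A, 3 • a = 0) (hv : ∀ {a b : L}, a ≠ 0 → b ≠ 0 → v (a * b) = v a + v b)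
    (P Q : (mordellCurve k).Point) :
    cubicDescent v c (P + Q) = cubicDescent v c P + cubicDescent v c Q := by
  rcases P with _ | ⟨x₁, y₁, h₁⟩
  · exact (congrArg _ (zero_add Q)).trans (zero_add _).symm
  rcases Q with _ | ⟨x₂, y₂, h₂⟩
  · exact (congrArg _ (add_zero _)).trans (add_zero _).symm
  by_cases hxy : x₁ = x₂ ∧ y₁ = (mordellCurve k).negY x₂ y₂
  · rw [Affine.Point.add_of_Y_eq hxy.1 hxy.2]
    have hneg := map_sub_add_map_neg_sub hk hc hA hv (mordellCurve_equation_iff.1 h₂.1)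
    rw [← mordellCurve_negY (k := k) x₂ y₂, ← hxy.2, add_comm] at hneg
    exact hneg.symm
  · rw [Affine.Point.add_some hxy]
    set l := (mordellCurve k).slope x₁ x₂ y₁ y₂
    have hne := algebraMap_ne_of_not_isSquare hk hc
    have hneg := map_sub_add_map_neg_sub hk hc hA hv
      (mordellCurve_equation_iff.1 (Affine.nonsingular_negAdd h₁ h₂ hxy).1)
    have hline := congrArg v (prod_slope_sub_eq_cube hc h₁.1 h₂.1 hxy)
    rw [hv (mul_ne_zero (hne _) (hne _)) (hne _), hv (hne _) (hne _),
      map_cube_eq_zero hA hv (hne _)] at hline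
    rw [← mordellCurve_negY (k := k) ((mordellCurve k).addX x₁ x₂ l)] at hneg
    exact add_left_cancel (hneg.trans (hline.symm.trans (add_comm _ _)))

end CubicDescent

section SquareRootMod

lemma isSquare_padicInt_of_isSquare_zmod {p : ℕ} [Fact p.Prime] (hp2 : p ≠ 2) {a : ℤ}
    (ha : ¬ (p : ℤ) ∣ a) (h : IsSquare (a : ZMod p)) : IsSquare (a : ℤ_[p]) := by
  have hp : Prime (p : ℤ) := Nat.prime_iff_prime_int.1 Fact.out
  obtain ⟨r, hr⟩ := h
  obtain ⟨b, rfl⟩ := ZMod.intCast_surjective r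
  have hab : (p : ℤ) ∣ b ^ 2 - a := by
    rw [← ZMod.intCast_zmod_eq_zero_iff_dvd]; push_cast; rw [hr]; ring
  have hb : ¬ (p : ℤ) ∣ 2 * b := by
    intro hdvd
    rcases hp.dvd_or_dvd hdvd with h2 | hb
    · exact hp2 ((Nat.prime_dvd_prime_iff_eq Fact.out Nat.prime_two).1 (by exact_mod_cast h2))
    · exact ha ((dvd_sub_right (hb.trans (dvd_pow_self b two_ne_zero))).1 hab)
  let F : Polynomial ℤ := Polynomial.X ^ 2 - Polynomial.C a
  have hF (z : ℤ_[p]) : F.aeval z = z ^ 2 - a := by simp [F]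
  have hF' (z : ℤ_[p]) : F.derivative.aeval z = 2 * z := by
    simp [F, -mul_eq_mul_left_iff, map_ofNat (Polynomial.aeval z) 2]
  obtain ⟨z, hz, -⟩ := hensels_lemma (F := F) (a := (b : ℤ_[p])) <| by
    have h1 : ‖(2 * b : ℤ_[p])‖ = 1 := by
      refine le_antisymm (PadicInt.norm_le_one _) (not_lt.1 fun hlt => hb ?_)
      rw [← PadicInt.norm_int_lt_one_iff_dvd]
      exact_mod_cast hlt
    rw [hF, hF', h1, one_pow]
    exact_mod_cast (PadicInt.norm_int_lt_one_iff_dvd _).2 hab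
  rw [hF, sub_eq_zero] at hz
  exact ⟨z, by rw [← hz, sq]⟩

lemma isSquare_neg_three_of_dvd_eisensteinNorm {p : ℕ} [Fact p.Prime] {x y : ℤ}
    (hy : ¬ (p : ℤ) ∣ y) (h : (p : ℤ) ∣ x ^ 2 - x * y + y ^ 2) : IsSquare ((-3 : ℤ) : ZMod p) := by
  rw [← ZMod.intCast_zmod_eq_zero_iff_dvd] at h hy
  push_cast at h
  refine ⟨(2 * x - y) / y, ?_⟩
  push_cast
  field_simp
  linear_combination -4 * h

end SquareRootMod

section SumOfCubes

lemma W12_eq_mordellCurve (d : ℤ) : W12 d = mordellCurve (-432 * (d : ℚ) ^ 2) := rfl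

/-- The point of `W_d` that corresponds to the point `(X, Y)` of the cubic `X³ + Y³ = d`. -/
def pointOfSumCubes {d X Y : ℤ} (hd : d ≠ 0) (h : X ^ 3 + Y ^ 3 = d) :
    (mordellCurve (-432 * (d : ℚ) ^ 2)).Point :=
  .some (12 * (X ^ 2 - X * Y + Y ^ 2 : ℤ)) (36 * (X - Y) * (X ^ 2 - X * Y + Y ^ 2 : ℤ)) <| by
    have : (d : ℚ) ≠ 0 := mod_cast hd
    rw [mordellCurve_nonsingular_iff (by positivity), ← h]
    push_cast
    ring

lemma not_isSquare_neg_432_mul_sq {d : ℤ} (hd : d ≠ 0) : ¬ IsSquare (-432 * (d : ℚ) ^ 2) := by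
  rintro ⟨r, hr⟩
  have hd' : 0 < (d : ℚ) ^ 2 := by positivity
  nlinarith [mul_self_nonneg r]

lemma three_torsion_eq_zero {p : ℕ} [Fact p.Prime] {d : ℤ} (hv : ¬ 3 ∣ padicValInt p d)
    (P : (mordellCurve (-432 * (d : ℚ) ^ 2)).Point) (hP : 3 • P = 0) : P = 0 := by
  have hd : d ≠ 0 := by rintro rfl; simp at hv
  rcases P with _ | ⟨x, y, h⟩
  · rfl
  exfalso
  rcases eq_zero_or_cube_eq_of_three_smul_eq_zero (by norm_num) hP with rfl | hx
  · refine not_isSquare_neg_432_mul_sq hd ⟨y, ?_⟩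
    rw [← sq, mordellCurve_equation_iff.1 h.1]
    ring
  · have hcube : (x / 12) ^ 3 = (d : ℚ) ^ 2 := by rw [div_pow, hx]; ring
    have hval := congrArg (padicValRat p) hcube
    rw [padicValRat.pow, padicValRat.pow, padicValRat.of_int] at hval
    push_cast at hval
    omega

variable {p : ℕ} [Fact p.Prime] {d X Y : ℤ}

/-- The descent homomorphism on `W_d` given by the `p`-adic valuation modulo `3`, where `s` is a
square root of `-3` in `ℤ_p`, so that `12ds` is a square root of `-432d²`. -/
noncomputable def padicDescent {s : ℤ_[p]} (hs : s * s = -3) (hd : d ≠ 0) :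
    (mordellCurve (-432 * (d : ℚ) ^ 2)).Point →+ ZMod 3 :=
  AddMonoidHom.mk' (cubicDescent (fun z : ℚ_[p] => ((z.valuation : ℤ) : ZMod 3))
      (12 * d * s)) <|
    cubicDescent_add (not_isSquare_neg_432_mul_sq hd)
      (by
        have hs' : (s : ℚ_[p]) * s = -3 := by exact_mod_cast congrArg ((↑) : ℤ_[p] → ℚ_[p]) hs
        simp only [map_mul, map_neg, map_pow, map_ofNat, map_intCast]
        linear_combination -144 * (d : ℚ_[p]) ^ 2 * hs')
      (by decide)
      (fun ha hb => by rw [Padic.valuation_mul ha hb, Int.cast_add])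

lemma valuation_eq_zero_of_isUnit {u : ℤ_[p]} (hu : IsUnit u) : u.valuation = 0 := by
  obtain ⟨w, hw⟩ := hu.exists_right_inv
  have := congrArg PadicInt.valuation hw
  rw [PadicInt.valuation_mul hu.ne_zero (right_ne_zero_of_mul_eq_one hw),
    PadicInt.valuation_one] at this
  omega

lemma isUnit_padicInt_intCast {m : ℤ} (h : ¬ (p : ℤ) ∣ m) : IsUnit (m : ℤ_[p]) := by
  rwa [← not_not (a := IsUnit _), PadicInt.not_isUnit_iff, PadicInt.norm_int_lt_one_iff_dvd]

lemma valuation_intCast_padicInt (m : ℤ) : (m : ℤ_[p]).valuation = padicValInt p m := by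
  have := PadicInt.valuation_coe (m : ℤ_[p])
  rw [PadicInt.coe_intCast, Padic.valuation_intCast] at this
  exact_mod_cast this.symm

lemma eisensteinFactor_mul_conj {R : Type*} [CommRing R] {s : R} (hs : s * s = -3) (X Y : R) :
    (3 * (X - Y) - (X + Y) * s) * (3 * (X - Y) + (X + Y) * s) = 12 * (X ^ 2 - X * Y + Y ^ 2) := by
  linear_combination -(X + Y) ^ 2 * hs

lemma eisensteinNorm_ne_zero (hd : d ≠ 0) (h : X ^ 3 + Y ^ 3 = d) : X ^ 2 - X * Y + Y ^ 2 ≠ 0 := by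
  rintro h0
  exact hd (by linear_combination -h + (X + Y) * h0)

lemma isUnit_padicInt_twelve (hp : ¬ (p : ℤ) ∣ 6) : IsUnit ((12 : ℤ) : ℤ_[p]) :=
  isUnit_padicInt_intCast fun h =>
    hp ((Nat.prime_iff_prime_int.1 Fact.out).dvd_of_dvd_pow (n := 2) (h.trans (by norm_num)))

lemma padicDescent_pointOfSumCubes (hp : ¬ (p : ℤ) ∣ 6) {s : ℤ_[p]} (hs : s * s = -3)
    (hd : d ≠ 0) (h : X ^ 3 + Y ^ 3 = d) :
    padicDescent hs hd (pointOfSumCubes hd h) =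
      (padicValInt p (X ^ 2 - X * Y + Y ^ 2) + (3 * (X - Y) - (X + Y) * s).valuation : ℕ) := by
  have h12 := isUnit_padicInt_twelve hp
  set n := X ^ 2 - X * Y + Y ^ 2
  set α : ℤ_[p] := 3 * (X - Y) - (X + Y) * s with hα
  have hn0 : (n : ℤ_[p]) ≠ 0 := mod_cast eisensteinNorm_ne_zero hd h
  have hα0 : α ≠ 0 := by
    have hmul := eisensteinFactor_mul_conj hs (X : ℤ_[p]) Y
    intro h0
    rw [← hα, h0, zero_mul] at hmul
    refine mul_ne_zero h12.ne_zero hn0 ?_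
    push_cast [n]
    exact hmul.symm
  have hfactor : ((36 * (X - Y) * n : ℚ) : ℚ_[p]) - 12 * d * s =
      (((12 : ℤ) * (n * α) : ℤ_[p]) : ℚ_[p]) := by
    have h3 : ((3 : ℤ_[p]) : ℚ_[p]) = 3 := rfl
    have h12' : (((12 : ℤ) : ℤ_[p]) : ℚ_[p]) = 12 := rfl
    rw [PadicInt.coe_mul, PadicInt.coe_mul, h12', hα, ← h]
    push_cast [n]
    rw [h3]
    ring
  change ((algebraMap ℚ ℚ_[p] (36 * (X - Y) * n) - 12 * d * s).valuation : ZMod 3) = _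
  rw [eq_ratCast, hfactor, PadicInt.valuation_coe,
    PadicInt.valuation_mul h12.ne_zero (mul_ne_zero hn0 hα0), PadicInt.valuation_mul hn0 hα0,
    valuation_eq_zero_of_isUnit h12, valuation_intCast_padicInt, zero_add, Int.cast_natCast]

lemma exists_sqrt_neg_three (hp : ¬ (p : ℤ) ∣ 6) (hXY : ¬ (p : ℤ) ∣ X + Y)
    (hn : (p : ℤ) ∣ X ^ 2 - X * Y + Y ^ 2) : ∃ s : ℤ_[p], s * s = -3 := by
  have hpp : Prime (p : ℤ) := Nat.prime_iff_prime_int.1 Fact.out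
  have hY : ¬ (p : ℤ) ∣ Y := by
    intro hY
    have hX : (p : ℤ) ∣ X ^ 2 := by
      have hid : X ^ 2 = (X ^ 2 - X * Y + Y ^ 2) + (X - Y) * Y := by ring
      rw [hid]
      exact dvd_add hn (hY.mul_left _)
    exact hXY (dvd_add (hpp.dvd_of_dvd_pow hX) hY)
  have h2 : p ≠ 2 := by rintro rfl; norm_num at hp
  have h3 : ¬ (p : ℤ) ∣ -3 := fun h => hp ((dvd_neg.1 h).trans (by norm_num))
  obtain ⟨s, hs⟩ := isSquare_padicInt_of_isSquare_zmod h2 h3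
    (isSquare_neg_three_of_dvd_eisensteinNorm hY hn)
  exact ⟨s, by rw [← hs]; norm_num⟩

lemma padicDescent_pointOfSumCubes_eq_zero (hp : ¬ (p : ℤ) ∣ 6) {s : ℤ_[p]} (hs : s * s = -3)
    (hd : d ≠ 0) (h : X ^ 3 + Y ^ 3 = d) (hn : ¬ (p : ℤ) ∣ X ^ 2 - X * Y + Y ^ 2) :
    padicDescent hs hd (pointOfSumCubes hd h) = 0 := by
  have hunit : IsUnit (3 * (X - Y) - (X + Y) * s) := by
    refine isUnit_of_mul_isUnit_left (y := 3 * (X - Y) + (X + Y) * s) ?_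
    rw [eisensteinFactor_mul_conj hs]
    exact_mod_cast (isUnit_padicInt_twelve hp).mul (isUnit_padicInt_intCast hn)
  rw [padicDescent_pointOfSumCubes hp, padicValInt.eq_zero_of_not_dvd hn,
    valuation_eq_zero_of_isUnit hunit]
  rfl

lemma padicDescent_pointOfSumCubes_ne_zero (hp : ¬ (p : ℤ) ∣ 6) {s : ℤ_[p]} (hs : s * s = -3)
    (hd : d ≠ 0) (h : X ^ 3 + Y ^ 3 = d) (hXY : ¬ (p : ℤ) ∣ X + Y)
    (hn : ¬ 3 ∣ padicValInt p (X ^ 2 - X * Y + Y ^ 2)) :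
    padicDescent hs hd (pointOfSumCubes hd h) ≠ 0 := by
  rw [padicDescent_pointOfSumCubes hp, Ne, ZMod.natCast_eq_zero_iff]
  set n := X ^ 2 - X * Y + Y ^ 2
  set α : ℤ_[p] := 3 * (X - Y) - (X + Y) * s
  set β : ℤ_[p] := 3 * (X - Y) + (X + Y) * s
  have hs_unit : IsUnit s := isUnit_of_mul_isUnit_left <| by
    rw [hs]
    exact_mod_cast isUnit_padicInt_intCast (m := -3)
      fun h3 => hp ((dvd_neg.1 h3).trans (by norm_num))
  have hsum : IsUnit (β + -α) := by
    convert ((isUnit_padicInt_intCast (m := 2) fun h2 => hp (h2.trans (by norm_num))).mul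
      (isUnit_padicInt_intCast hXY)).mul hs_unit using 1
    push_cast [α, β]
    ring
  rcases IsLocalRing.isUnit_or_isUnit_of_isUnit_add hsum with hβ | hα
  · have hval : α.valuation = padicValInt p n := by
      have h12 := isUnit_padicInt_twelve hp
      have hn0 : (n : ℤ_[p]) ≠ 0 := mod_cast eisensteinNorm_ne_zero hd h
      have hαβ : α * β = ((12 : ℤ) : ℤ_[p]) * n := by
        rw [eisensteinFactor_mul_conj hs]
        push_cast [n]
        rfl
      have hα0 : α ≠ 0 := left_ne_zero_of_mul (hαβ ▸ mul_ne_zero h12.ne_zero hn0)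
      have hmul := congrArg PadicInt.valuation hαβ
      rwa [PadicInt.valuation_mul hα0 hβ.ne_zero, PadicInt.valuation_mul h12.ne_zero hn0,
        valuation_eq_zero_of_isUnit hβ, valuation_eq_zero_of_isUnit h12, zero_add, add_zero,
        valuation_intCast_padicInt] at hmul
    rw [hval]
    omega
  · rwa [valuation_eq_zero_of_isUnit ((IsUnit.neg_iff α).1 hα), add_zero]

lemma exists_descent_separating (hp : ¬ (p : ℤ) ∣ 6) (hd : d ≠ 0) {X' Y' : ℤ}
    (h : X ^ 3 + Y ^ 3 = d) (h' : X' ^ 3 + Y' ^ 3 = d) (hXY : ¬ (p : ℤ) ∣ X + Y)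
    (hn : ¬ 3 ∣ padicValInt p (X ^ 2 - X * Y + Y ^ 2))
    (hn' : ¬ (p : ℤ) ∣ X' ^ 2 - X' * Y' + Y' ^ 2) :
    ∃ f : (mordellCurve (-432 * (d : ℚ) ^ 2)).Point →+ ZMod 3,
      f (pointOfSumCubes hd h) ≠ 0 ∧ f (pointOfSumCubes hd h') = 0 := by
  have hpn : (p : ℤ) ∣ X ^ 2 - X * Y + Y ^ 2 := by
    by_contra hpn
    exact hn (by simp [padicValInt.eq_zero_of_not_dvd hpn])
  obtain ⟨s, hs⟩ := exists_sqrt_neg_three hp hXY hpn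
  exact ⟨padicDescent hs hd, padicDescent_pointOfSumCubes_ne_zero hp hs hd h hXY hn,
    padicDescent_pointOfSumCubes_eq_zero hp hs hd h' hn'⟩

lemma linearIndependent_prod_of_separating {F V W : Type*} [Field F] [AddCommGroup V] [Module F V]
    [AddCommGroup W] [Module F W] {v v' : V} {w w' : W} (hv : v ≠ 0) (hv' : v' = 0) (hw : w = 0)
    (hw' : w' ≠ 0) : LinearIndependent F ![(v, w), (v', w')] := by
  subst hv' hw
  rw [LinearIndependent.pair_iff]
  intro a b hab
  simpa [hv, hw'] using hab

lemma two_le_rank_of_two_sumCubes {q : ℕ} [Fact q.Prime] (hp : ¬ (p : ℤ) ∣ 6)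
    (hq : ¬ (q : ℤ) ∣ 6) (hd : d ≠ 0) {X' Y' : ℤ} (h : X ^ 3 + Y ^ 3 = d)
    (h' : X' ^ 3 + Y' ^ 3 = d) (hpXY : ¬ (p : ℤ) ∣ X + Y)
    (hpn : ¬ 3 ∣ padicValInt p (X ^ 2 - X * Y + Y ^ 2))
    (hpn' : ¬ (p : ℤ) ∣ X' ^ 2 - X' * Y' + Y' ^ 2) (hqXY' : ¬ (q : ℤ) ∣ X' + Y')
    (hqn' : ¬ 3 ∣ padicValInt q (X' ^ 2 - X' * Y' + Y' ^ 2))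
    (hqn : ¬ (q : ℤ) ∣ X ^ 2 - X * Y + Y ^ 2) : 2 ≤ Module.rank ℤ (W12 d).Point := by
  obtain ⟨f, hfP, hfQ⟩ := exists_descent_separating hp hd h h' hpXY hpn hpn'
  obtain ⟨g, hgQ, hgP⟩ := exists_descent_separating hq hd h' h hqXY' hqn' hqn
  have hvd : ¬ 3 ∣ padicValInt p d := by
    have hfactor : d = (X + Y) * (X ^ 2 - X * Y + Y ^ 2) := by rw [← h]; ring
    rwa [hfactor, padicValInt.mul (by rintro h0; simp [h0] at hpXY) (eisensteinNorm_ne_zero hd h),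
      padicValInt.eq_zero_of_not_dvd hpXY, zero_add]
  have hli : LinearIndependent ℤ ![pointOfSumCubes hd h, pointOfSumCubes hd h'] := by
    refine linearIndependent_int_of_torsionFree (ℓ := 3) (f.prod g) ?_ (three_torsion_eq_zero hvd)
    have hcomp : f.prod g ∘ ![pointOfSumCubes hd h, pointOfSumCubes hd h'] =
        ![(f (pointOfSumCubes hd h), g (pointOfSumCubes hd h)),
          (f (pointOfSumCubes hd h'), g (pointOfSumCubes hd h'))] := by
      funext i
      fin_cases i <;> rfl
    rw [hcomp]
    exact linearIndependent_prod_of_separating hfP hfQ hgP hgQ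
  have hrank := hli.cardinal_le_rank
  rwa [Cardinal.mk_fin, ← W12_eq_mordellCurve] at hrank

end SumOfCubes

section SexticForm

section Forms

variable {R : Type*} [CommRing R]

/-- The homogenisation of the factor `3T² - 3T + 1` of the paper's `k(T)`. -/
def quadForm₁ (a b : R) : R := 3 * a ^ 2 - 3 * a * b + b ^ 2

/-- The homogenisation of the factor `T² + T + 1` of the paper's `k(T)`. -/
def quadForm₂ (a b : R) : R := a ^ 2 + a * b + b ^ 2

/-- The homogenisation of the factor `T² - 3T + 3` of the paper's `k(T)`. -/
def quadForm₃ (a b : R) : R := a ^ 2 - 3 * a * b + 3 * b ^ 2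

/-- The binary sextic form `F` for which the paper's `k(T)` is `63 F(T, 1)`. -/
def sexticForm (a b : R) : R := quadForm₁ a b * quadForm₂ a b * quadForm₃ a b

/-- The first coordinate of the homogenised polynomial point on `X³ + Y³ = 63 F(a, b)`. Since `F`
is symmetric, exchanging `a` and `b` gives the second point. -/
def sumCubesX (a b : R) : R := 5 * a ^ 2 - 5 * a * b - 3 * b ^ 2

/-- The second coordinate of the point of `sumCubesX`. -/
def sumCubesY (a b : R) : R := 4 * a ^ 2 - 4 * a * b + 6 * b ^ 2

lemma quadForm₁_swap (a b : R) : quadForm₁ b a = quadForm₃ a b := by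
  simp only [quadForm₁, quadForm₃]; ring

lemma quadForm₂_swap (a b : R) : quadForm₂ b a = quadForm₂ a b := by
  simp only [quadForm₂]; ring

lemma quadForm₃_swap (a b : R) : quadForm₃ b a = quadForm₁ a b :=
  (quadForm₁_swap b a).symm

lemma sexticForm_swap (a b : R) : sexticForm b a = sexticForm a b := by
  simp only [sexticForm, quadForm₁, quadForm₂, quadForm₃]; ring

lemma sumCubesX_cube_add_sumCubesY_cube (a b : R) :
    sumCubesX a b ^ 3 + sumCubesY a b ^ 3 = 63 * sexticForm a b := by
  simp only [sumCubesX, sumCubesY, sexticForm, quadForm₁, quadForm₂, quadForm₃]; ring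

lemma sumCubesX_add_sumCubesY (a b : R) : sumCubesX a b + sumCubesY a b = 3 * quadForm₁ a b := by
  simp only [sumCubesX, sumCubesY, quadForm₁]; ring

lemma eisensteinNorm_sumCubes (a b : R) :
    sumCubesX a b ^ 2 - sumCubesX a b * sumCubesY a b + sumCubesY a b ^ 2 =
      21 * quadForm₂ a b * quadForm₃ a b := by
  simp only [sumCubesX, sumCubesY, quadForm₂, quadForm₃]; ring

lemma isCoprime_of_combination_eq_mul {a b u v n : R} (hab : IsCoprime a b)
    (hu : IsCoprime u n) (ha : ∃ x y, x * u + y * v = n * a) (hb : ∃ x y, x * u + y * v = n * b) :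
    IsCoprime u v := by
  obtain ⟨x, y, hxy⟩ := ha
  obtain ⟨x', y', hxy'⟩ := hb
  obtain ⟨r, s, hrs⟩ := hab
  obtain ⟨k, l, hkl⟩ := hu
  refine ⟨k + l * (r * x + s * x'), l * (r * y + s * y'), ?_⟩
  linear_combination hkl + n * l * hrs + l * r * hxy + l * s * hxy'

lemma isCoprime_quadForm₁_quadForm₂ {a b : R} (hab : IsCoprime a b)
    (h : IsCoprime (quadForm₁ a b) 14) : IsCoprime (quadForm₁ a b) (quadForm₂ a b) :=
  isCoprime_of_combination_eq_mul (hab.pow (m := 3) (n := 3)) h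
    ⟨3 * a + 2 * b, 5 * a - 2 * b, by simp only [quadForm₁, quadForm₂]; ring⟩
    ⟨3 * a + 2 * b, -9 * a + 12 * b, by simp only [quadForm₁, quadForm₂]; ring⟩

lemma isCoprime_quadForm₁_quadForm₃ {a b : R} (hab : IsCoprime a b)
    (h : IsCoprime (quadForm₁ a b) 14) : IsCoprime (quadForm₁ a b) (quadForm₃ a b) :=
  isCoprime_of_combination_eq_mul (hab.pow (m := 3) (n := 3)) h
    ⟨3 * a + 9 * b, 5 * a - 3 * b, by simp only [quadForm₁, quadForm₃]; ring⟩
    ⟨-3 * a + 5 * b, 9 * a + 3 * b, by simp only [quadForm₁, quadForm₃]; ring⟩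

end Forms

lemma Cubefree.of_dvd {m n : ℤ} (hn : Cubefree n) (h : m ∣ n) : Cubefree m :=
  fun p hp hpm => hn p hp (hpm.trans h)

lemma Cubefree.mul {m n : ℤ} (hm : Cubefree m) (hn : Cubefree n) (hmn : IsCoprime m n) :
    Cubefree (m * n) := by
  intro p hp hdvd
  by_cases hpm : p ∣ m
  · have hpn : ¬ p ∣ n := fun hpn => hp.not_isUnit (hmn.isUnit_of_dvd' hpm hpn)
    exact hm p hp (hp.pow_dvd_of_dvd_mul_right 3 hpn hdvd)
  · exact hn p hp (hp.pow_dvd_of_dvd_mul_left 3 hpm hdvd)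

lemma cubefree_iff_nat_prime {n : ℤ} :
    Cubefree n ↔ ∀ p : ℕ, p.Prime → ¬ (p : ℤ) ^ 3 ∣ n := by
  refine ⟨fun h p hp => h p (Nat.prime_iff_prime_int.1 hp), fun h p hp hdvd => ?_⟩
  refine h p.natAbs (Int.prime_iff_natAbs_prime.1 hp) ?_
  rwa [Int.natCast_natAbs, ← abs_pow, abs_dvd]

lemma cubefree_sixtyThree : Cubefree 63 := by
  refine cubefree_iff_nat_prime.2 fun p hp hdvd => ?_
  have hdvd' : p ^ 3 ∣ 63 := by exact_mod_cast hdvd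
  have hp_lt : p < 4 := lt_of_pow_lt_pow_left₀ 3 (by norm_num)
    ((Nat.le_of_dvd (by norm_num) hdvd').trans_lt (by norm_num))
  have hp_two := hp.two_le
  interval_cases p <;> omega

lemma not_three_dvd_padicValInt {p : ℕ} [Fact p.Prime] {n : ℤ} (hn : Cubefree n)
    (hpn : (p : ℤ) ∣ n) : ¬ 3 ∣ padicValInt p n := by
  have hcube : ¬ (p : ℤ) ^ 3 ∣ n := cubefree_iff_nat_prime.1 hn p Fact.out
  have hn0 : n ≠ 0 := by rintro rfl; simp at hcube
  have hpos : 1 ≤ padicValInt p n :=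
    ((padicValInt_dvd_iff 1 n).1 (by rwa [pow_one])).resolve_left hn0
  have hlt : ¬ 3 ≤ padicValInt p n := fun h => hcube ((padicValInt_dvd_iff 3 n).2 (Or.inr h))
  omega

/-- Pairs at which the sextic form has a value `F(a, b)` for which both polynomial points are
available and independent. -/
structure IsAdmissible (a b : ℤ) : Prop where
  one_lt_left : 1 < a
  one_lt_right : 1 < b
  isCoprime : IsCoprime a b
  isCoprime_sexticForm : IsCoprime (sexticForm a b) 42
  cubefree_quadForm₁ : Cubefree (quadForm₁ a b)
  cubefree_quadForm₂ : Cubefree (quadForm₂ a b)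
  cubefree_quadForm₃ : Cubefree (quadForm₃ a b)

namespace IsAdmissible

variable {a b : ℤ}

lemma swap (h : IsAdmissible a b) : IsAdmissible b a where
  one_lt_left := h.one_lt_right
  one_lt_right := h.one_lt_left
  isCoprime := h.isCoprime.symm
  isCoprime_sexticForm := sexticForm_swap a b ▸ h.isCoprime_sexticForm
  cubefree_quadForm₁ := quadForm₁_swap a b ▸ h.cubefree_quadForm₃
  cubefree_quadForm₂ := quadForm₂_swap a b ▸ h.cubefree_quadForm₂
  cubefree_quadForm₃ := quadForm₃_swap a b ▸ h.cubefree_quadForm₁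

lemma sexticForm_ne_zero (h : IsAdmissible a b) : sexticForm a b ≠ 0 := by
  intro h0
  have hcop := h.isCoprime_sexticForm
  rw [h0, isCoprime_zero_left] at hcop
  exact absurd hcop (by decide)

lemma isCoprime_quadForm₁_fourteen (h : IsAdmissible a b) : IsCoprime (quadForm₁ a b) 14 :=
  (h.isCoprime_sexticForm.of_isCoprime_of_dvd_right (by norm_num)).of_isCoprime_of_dvd_left
    ((dvd_mul_right _ _).trans (dvd_mul_right _ _))

lemma isCoprime_quadForm₁₃ (h : IsAdmissible a b) :
    IsCoprime (quadForm₁ a b) (quadForm₃ a b) :=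
  isCoprime_quadForm₁_quadForm₃ h.isCoprime h.isCoprime_quadForm₁_fourteen

lemma isCoprime_quadForm₁₂ (h : IsAdmissible a b) :
    IsCoprime (quadForm₁ a b) (quadForm₂ a b) :=
  isCoprime_quadForm₁_quadForm₂ h.isCoprime h.isCoprime_quadForm₁_fourteen

lemma isCoprime_quadForm₃₂ (h : IsAdmissible a b) :
    IsCoprime (quadForm₃ a b) (quadForm₂ a b) := by
  simpa only [quadForm₁_swap, quadForm₂_swap] using h.swap.isCoprime_quadForm₁₂

lemma cubefree (h : IsAdmissible a b) : Cubefree (63 * sexticForm a b) := by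
  have hcop : IsCoprime 63 (sexticForm a b) :=
    (h.isCoprime_sexticForm.pow_right (n := 2)).symm.of_isCoprime_of_dvd_left (by norm_num)
  exact cubefree_sixtyThree.mul
    ((h.cubefree_quadForm₁.mul h.cubefree_quadForm₂ h.isCoprime_quadForm₁₂).mul
      h.cubefree_quadForm₃ (h.isCoprime_quadForm₁₃.mul_left h.isCoprime_quadForm₃₂.symm)) hcop

lemma one_lt_quadForm₃ (h : IsAdmissible a b) : 1 < quadForm₃ a b := by
  have hb := h.one_lt_right
  simp only [quadForm₃]
  nlinarith [sq_nonneg (2 * a - 3 * b)]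

-- Any prime divisor of `quadForm₃ a b` will do.
lemma exists_separating_prime (h : IsAdmissible a b) : ∃ p : ℕ, p.Prime ∧ ¬ (p : ℤ) ∣ 6 ∧
    ¬ (p : ℤ) ∣ sumCubesX a b + sumCubesY a b ∧
    ¬ 3 ∣ padicValInt p
      (sumCubesX a b ^ 2 - sumCubesX a b * sumCubesY a b + sumCubesY a b ^ 2) ∧
    ¬ (p : ℤ) ∣ sumCubesX b a ^ 2 - sumCubesX b a * sumCubesY b a + sumCubesY b a ^ 2 := by
  obtain ⟨p, hp, hpdvd⟩ := Nat.exists_prime_and_dvd (n := (quadForm₃ a b).natAbs)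
    (by have := h.one_lt_quadForm₃; omega)
  have : Fact p.Prime := ⟨hp⟩
  have hp₃ : (p : ℤ) ∣ quadForm₃ a b := Int.natCast_dvd.2 hpdvd
  have not_dvd {n : ℤ} (hn : IsCoprime (quadForm₃ a b) n) : ¬ (p : ℤ) ∣ n :=
    fun hpn => (Nat.prime_iff_prime_int.1 hp).not_isUnit (hn.isUnit_of_dvd' hp₃ hpn)
  have hcop {n : ℤ} (hn : n ∣ 42) : IsCoprime (quadForm₃ a b) n :=
    (h.isCoprime_sexticForm.of_isCoprime_of_dvd_left (dvd_mul_left _ _)).of_isCoprime_of_dvd_right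
      hn
  simp only [sumCubesX_add_sumCubesY, eisensteinNorm_sumCubes, quadForm₂_swap a b,
    quadForm₃_swap a b]
  refine ⟨p, hp, not_dvd (hcop (by norm_num)),
    not_dvd ((hcop (by norm_num)).mul_right h.isCoprime_quadForm₁₃.symm), ?_,
    not_dvd (((hcop (by norm_num)).mul_right h.isCoprime_quadForm₃₂).mul_right
      h.isCoprime_quadForm₁₃.symm)⟩
  exact not_three_dvd_padicValInt
    (h.cubefree.of_dvd ⟨3 * quadForm₁ a b, by simp only [sexticForm]; ring⟩) (hp₃.mul_left _)

lemma two_le_rank (h : IsAdmissible a b) :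
    2 ≤ Module.rank ℤ (W12 (63 * sexticForm a b)).Point := by
  obtain ⟨p, hp, hp6, hpXY, hpn, hpn'⟩ := h.exists_separating_prime
  obtain ⟨q, hq, hq6, hqXY, hqn, hqn'⟩ := h.swap.exists_separating_prime
  have : Fact p.Prime := ⟨hp⟩
  have : Fact q.Prime := ⟨hq⟩
  exact two_le_rank_of_two_sumCubes hp6 hq6 (mul_ne_zero (by norm_num) h.sexticForm_ne_zero)
    (sumCubesX_cube_add_sumCubesY_cube a b)
    (sexticForm_swap a b ▸ sumCubesX_cube_add_sumCubesY_cube b a) hpXY hpn hpn' hqXY hqn hqn'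

end IsAdmissible

end SexticForm

open Finset

section CongruenceBox

lemma card_Ioc_filter_modEq_le (a v : ℤ) (L : ℕ) {m : ℕ} (hm : 0 < m) :
    #{x ∈ Ioc a (a + L) | x ≡ v [ZMOD m]} ≤ L / m + 1 := by
  have hcard := Int.Ioc_filter_modEq_card a (a + L) (r := m) (by exact_mod_cast hm) v
  have hfloor := Int.le_floor_add_floor ((a - v : ℚ) / m) (L / m)
  rw [Rat.floor_natCast_div_natCast, ← add_div, ← add_sub_right_comm, ← Int.natCast_div] at hfloor
  push_cast at hcard
  generalize L / m = n at *
  omega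

lemma card_Ioc_mul_filter_modEq (M N : ℕ) (hM : 0 < M) (r : ℤ) :
    #{x ∈ Ioc ((M : ℤ) * N) (2 * (M * N)) | x ≡ r [ZMOD M]} = N := by
  have hM' : (M : ℚ) ≠ 0 := by positivity
  have hcard := Int.Ioc_filter_modEq_card (M * N) (2 * (M * N)) (r := M) (by exact_mod_cast hM) r
  have hshift : (((2 * (M * N) : ℤ) : ℚ) - r) / (M : ℤ) =
      (((M * N : ℤ) : ℚ) - r) / (M : ℤ) + (N : ℤ) := by
    push_cast; field_simp; ring
  rw [hshift, Int.floor_add_intCast] at hcard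
  omega

/-- The elements of `(MN, 2MN]` that are congruent to `r` modulo `M`; there are `N` of them. -/
noncomputable def dyadicProgression (M N : ℕ) (r : ℤ) : Finset ℤ :=
  {x ∈ Ioc ((M : ℤ) * N) (2 * (M * N)) | x ≡ r [ZMOD M]}

/-- The pairs with entries in `(MN, 2MN]` that are congruent to `(r, s)` modulo `M`. -/
noncomputable def dyadicBox (M N : ℕ) (r s : ℤ) : Finset (ℤ × ℤ) :=
  dyadicProgression M N r ×ˢ dyadicProgression M N s

variable {M N : ℕ} {r s : ℤ} {p k : ℕ}

lemma card_dyadicBox (hM : 0 < M) : #(dyadicBox M N r s) = N ^ 2 := by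
  rw [dyadicBox, card_product, dyadicProgression, dyadicProgression,
    card_Ioc_mul_filter_modEq M N hM, card_Ioc_mul_filter_modEq M N hM, sq]

lemma card_dyadicProgression_filter_modEq_le (hM : 0 < M) {q : ℕ} (hq : 0 < q) (hqM : M.Coprime q)
    (t : ℤ) : #{x ∈ dyadicProgression M N r | x ≡ t [ZMOD q]} ≤ N / q + 1 := by
  obtain hempty | ⟨c, hc⟩ := {x ∈ dyadicProgression M N r | x ≡ t [ZMOD q]}.eq_empty_or_nonempty
  · simp [hempty]
  simp only [dyadicProgression, mem_filter] at hc
  have hsub : {x ∈ dyadicProgression M N r | x ≡ t [ZMOD q]} ⊆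
      {x ∈ Ioc ((M : ℤ) * N) (M * N + (M * N : ℕ)) | x ≡ c [ZMOD (M * q : ℕ)]} := by
    intro x hx
    simp only [dyadicProgression, mem_filter] at hx
    rw [mem_filter, Nat.cast_mul, Nat.cast_mul, ← two_mul]
    exact ⟨hx.1.1, (Int.modEq_and_modEq_iff_modEq_mul (by simpa using hqM)).1
      ⟨hx.1.2.trans hc.1.2.symm, hx.2.trans hc.2.symm⟩⟩
  have hcard := (card_le_card hsub).trans (card_Ioc_filter_modEq_le _ c _ (Nat.mul_pos hM hq))
  rwa [Nat.mul_div_mul_left _ _ hM] at hcard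

lemma exists_roots_mod_prime_pow {p α β γ : ℤ} (hp : Prime p) (hα : ¬ p ∣ α)
    (hD : ¬ p ∣ discrim α β γ) (k : ℕ) :
    ∃ t t' : ℤ, ∀ x, p ^ k ∣ α * x ^ 2 + β * x + γ → x ≡ t [ZMOD p ^ k] ∨ x ≡ t' [ZMOD p ^ k] := by
  obtain ⟨t, ht⟩ | hnone := em (∃ t, p ^ k ∣ α * t ^ 2 + β * t + γ)
  swap
  · exact ⟨0, 0, fun x hx => absurd ⟨x, hx⟩ hnone⟩
  obtain ⟨u, v, huv⟩ := IsCoprime.pow_left (m := k) ((Prime.coprime_iff_not_dvd hp).2 hα)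
  refine ⟨t, v * (-β - α * t), fun x hx => ?_⟩
  rcases Nat.eq_zero_or_pos k with rfl | hk
  · simp [Int.modEq_one]
  have hdvd : p ^ k ∣ (x - t) * (α * (x + t) + β) :=
    (dvd_sub hx ht).trans (dvd_of_eq (by ring))
  by_cases hpt : p ∣ x - t
  · refine Or.inl (Int.ModEq.symm (Int.modEq_iff_dvd.2 (hp.pow_dvd_of_dvd_mul_right k ?_ hdvd)))
    intro hpt'
    refine hD ?_
    have hpk : p ∣ α * t ^ 2 + β * t + γ := (dvd_pow_self p hk.ne').trans ht
    have hderiv : p ∣ 2 * α * t + β :=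
      (dvd_sub hpt' (hpt.mul_left α)).trans (dvd_of_eq (by ring))
    exact (dvd_sub (hderiv.mul_left (2 * α * t + β)) (hpk.mul_left (4 * α))).trans
      (dvd_of_eq (by simp only [discrim]; ring))
  · refine Or.inr (Int.ModEq.symm (Int.modEq_iff_dvd.2 ?_))
    have hroot := hp.pow_dvd_of_dvd_mul_left k hpt hdvd
    have hx_sub : x - v * (-β - α * t) = u * p ^ k * x + v * (α * (x + t) + β) := by
      linear_combination -x * huv
    exact hx_sub ▸ dvd_add ((dvd_mul_left _ _).mul_right _) (hroot.mul_left v)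

lemma card_dyadicProgression_filter_quadratic_le (hM : 0 < M) (hp : p.Prime) (hpM : ¬ p ∣ M)
    {α β γ : ℤ} (hα : ¬ (p : ℤ) ∣ α) (hD : ¬ (p : ℤ) ∣ discrim α β γ) :
    #{x ∈ dyadicProgression M N r | (p : ℤ) ^ k ∣ α * x ^ 2 + β * x + γ} ≤
      2 * (N / p ^ k + 1) := by
  obtain ⟨t, t', hroots⟩ := exists_roots_mod_prime_pow (Nat.prime_iff_prime_int.1 hp) hα hD k
  have hcop : M.Coprime (p ^ k) := (((Nat.Prime.coprime_iff_not_dvd hp).2 hpM).pow_left k).symm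
  have hcount := fun t => card_dyadicProgression_filter_modEq_le (N := N) (r := r) hM
    (pow_pos hp.pos k) hcop t
  push_cast at hcount
  calc _ ≤ #({x ∈ dyadicProgression M N r | x ≡ t [ZMOD p ^ k]} ∪
        {x ∈ dyadicProgression M N r | x ≡ t' [ZMOD p ^ k]}) := by
        rw [← filter_or]
        exact card_le_card (monotone_filter_right _ fun x _ => hroots x)
    _ ≤ _ := by
      have := card_union_le {x ∈ dyadicProgression M N r | x ≡ t [ZMOD p ^ k]}
        {x ∈ dyadicProgression M N r | x ≡ t' [ZMOD p ^ k]}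
      linarith [hcount t, hcount t']

lemma card_filter_product_le {ι κ : Type*} {A : Finset ι} {B : Finset κ}
    {P : ι × κ → Prop} [DecidablePred P] {n : ℕ} (h : ∀ b ∈ B, #{a ∈ A | P (a, b)} ≤ n) :
    #{z ∈ A ×ˢ B | P z} ≤ n * #B := by
  classical
  refine card_le_mul_card_image_of_maps_to (f := Prod.snd)
    (fun z hz => (mem_product.1 (mem_filter.1 hz).1).2) n fun b hb => ?_
  refine (card_le_card_of_injOn Prod.fst ?_ ?_).trans (h b hb)
  · rintro ⟨a, b'⟩ hz
    simp only [coe_filter, mem_filter, mem_product, Set.mem_ofPred_eq] at hz ⊢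
    obtain ⟨⟨⟨ha, -⟩, hP⟩, rfl⟩ := hz
    exact ⟨ha, hP⟩
  · rintro ⟨a, b'⟩ hz ⟨a', b''⟩ hz' haa'
    simp only [coe_filter, mem_filter, mem_product, Set.mem_ofPred_eq] at hz hz' haa'
    rw [haa', hz.2, hz'.2]

lemma card_dyadicBox_filter_binaryForm_le (hM : 0 < M) (hp : p.Prime) (hpM : ¬ p ∣ M)
    (hk : k ≠ 0) {α β γ : ℤ} (hα : ¬ (p : ℤ) ∣ α) (hD : ¬ (p : ℤ) ∣ discrim α β γ) :
    #{z ∈ dyadicBox M N r s | IsCoprime z.1 z.2 ∧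
      (p : ℤ) ^ k ∣ α * z.1 ^ 2 + β * z.1 * z.2 + γ * z.2 ^ 2} ≤ 2 * (N / p ^ k + 1) * N := by
  have hpZ : Prime (p : ℤ) := Nat.prime_iff_prime_int.1 hp
  have hB : #(dyadicProgression M N s) = N := card_Ioc_mul_filter_modEq M N hM s
  refine (card_filter_product_le fun b _ => ?_).trans_eq (by rw [hB])
  dsimp only
  by_cases hpb : (p : ℤ) ∣ b
  · rw [filter_eq_empty_iff.2]
    · simp
    rintro a - ⟨hab, hdvd⟩
    have hpa : (p : ℤ) ∣ α * a ^ 2 :=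
      (dvd_sub ((dvd_pow_self _ hk).trans hdvd) (hpb.mul_left (β * a + γ * b))).trans
        (dvd_of_eq (by ring))
    exact hpZ.not_isUnit (hab.isUnit_of_dvd'
      (hpZ.dvd_of_dvd_pow ((hpZ.dvd_or_dvd hpa).resolve_left hα)) hpb)
  · have hD' : ¬ (p : ℤ) ∣ discrim α (β * b) (γ * b ^ 2) := by
      have hdiscrim : discrim α (β * b) (γ * b ^ 2) = discrim α β γ * b ^ 2 := by
        simp only [discrim]; ring
      rw [hdiscrim]
      exact fun h => (hpZ.dvd_or_dvd h).elim hD fun h => hpb (hpZ.dvd_of_dvd_pow h)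
    refine le_trans (card_le_card (monotone_filter_right _ ?_))
      (card_dyadicProgression_filter_quadratic_le hM hp hpM hα hD')
    rintro a - ⟨-, hdvd⟩
    convert hdvd using 1; ring

lemma card_dyadicBox_filter_common_dvd_le (hM : 0 < M) (hp : p.Prime) (hpM : ¬ p ∣ M) :
    #{z ∈ dyadicBox M N r s | (p : ℤ) ∣ z.1 ∧ (p : ℤ) ∣ z.2} ≤ (N / p + 1) ^ 2 := by
  have hcount (t : ℤ) : #{x ∈ dyadicProgression M N t | (p : ℤ) ∣ x} ≤ N / p + 1 := by
    simpa only [Int.modEq_zero_iff_dvd] using card_dyadicProgression_filter_modEq_le hM hp.pos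
      ((Nat.Prime.coprime_iff_not_dvd hp).2 hpM).symm 0
  rw [dyadicBox, filter_product, card_product, sq]
  exact Nat.mul_le_mul (hcount r) (hcount s)

end CongruenceBox

section BadPairs

lemma card_le_of_cover_inv_sq {ι : Type*} {G : Finset ι} {u : ℕ → Finset ι} {T L : ℕ}
    (hT : 0 < T) {P : Finset ℕ} (hP : P ⊆ Ioc T L) (hcover : ∀ i ∈ G, ∃ p ∈ P, i ∈ u p) {A B : ℝ}
    (hA : 0 ≤ A) (hB : 0 ≤ B) (hu : ∀ p ∈ P, (#(u p) : ℝ) ≤ A * ((p : ℝ) ^ 2)⁻¹ + B) :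
    (#G : ℝ) ≤ A / T + B * L := by
  classical
  have hsum : ∑ n ∈ Ioc T L, ((n : ℝ) ^ 2)⁻¹ ≤ (T : ℝ)⁻¹ := by
    rcases le_total T L with hTL | hLT
    · exact (sum_Ioc_inv_sq_le_sub hT.ne' hTL).trans (sub_le_self _ (by positivity))
    · rw [Ioc_eq_empty_of_le hLT, sum_empty]; positivity
  calc (#G : ℝ) ≤ ∑ p ∈ P, (#(u p) : ℝ) := by
        exact_mod_cast (card_le_card fun i hi => mem_biUnion.2 (hcover i hi)).trans card_biUnion_le
    _ ≤ ∑ p ∈ P, (A * ((p : ℝ) ^ 2)⁻¹ + B) := sum_le_sum hu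
    _ ≤ ∑ n ∈ Ioc T L, (A * ((n : ℝ) ^ 2)⁻¹ + B) :=
        sum_le_sum_of_subset_of_nonneg hP fun _ _ _ => by positivity
    _ = A * ∑ n ∈ Ioc T L, ((n : ℝ) ^ 2)⁻¹ + B * (L - T : ℕ) := by
        rw [sum_add_distrib, mul_sum, sum_const, Nat.card_Ioc, nsmul_eq_mul, mul_comm B]
    _ ≤ A / T + B * L := by
        rw [div_eq_mul_inv]
        gcongr
        exact Nat.sub_le L T

lemma quadForm_mem_Ioc {a b B : ℤ} (ha : 0 < a) (hb : 0 < b) (haB : a ≤ B) (hbB : b ≤ B) :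
    quadForm₁ a b ∈ Ioc 0 (4 * B ^ 2) ∧ quadForm₂ a b ∈ Ioc 0 (4 * B ^ 2) ∧
      quadForm₃ a b ∈ Ioc 0 (4 * B ^ 2) := by
  have hab := mul_pos ha hb
  have ha2 : a ^ 2 ≤ B ^ 2 := by gcongr
  have hb2 : b ^ 2 ≤ B ^ 2 := by gcongr
  simp only [mem_Ioc, quadForm₁, quadForm₂, quadForm₃]
  refine ⟨⟨?_, ?_⟩, ⟨?_, ?_⟩, ?_, ?_⟩ <;>
  nlinarith [sq_nonneg (2 * b - 3 * a), sq_nonneg (2 * a - 3 * b), sq_nonneg (a - b)]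

lemma sexticForm_mem_Ioc {a b B : ℤ} (ha : 0 < a) (hb : 0 < b) (haB : a ≤ B) (hbB : b ≤ B) :
    sexticForm a b ∈ Ioc 0 (64 * B ^ 6) := by
  obtain ⟨h₁, h₂, h₃⟩ := quadForm_mem_Ioc ha hb haB hbB
  rw [mem_Ioc] at *
  refine ⟨mul_pos (mul_pos h₁.1 h₂.1) h₃.1, ?_⟩
  calc sexticForm a b ≤ 4 * B ^ 2 * (4 * B ^ 2) * (4 * B ^ 2) :=
        mul_le_mul (mul_le_mul h₁.2 h₂.2 h₂.1.le (by positivity)) h₃.2 h₃.1.le (by positivity)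
    _ = 64 * B ^ 6 := by ring

lemma pow_six_lt_sexticForm {a b C : ℤ} (hC : 0 ≤ C) (ha : C < a) (hb : C < b) :
    C ^ 6 < sexticForm a b := by
  have ha2 : C ^ 2 < a ^ 2 := by gcongr
  have hb2 : C ^ 2 < b ^ 2 := by gcongr
  have hab : C * C ≤ a * b := mul_le_mul ha.le hb.le hC (hC.trans ha.le)
  have h₁ : 3 * C ^ 2 < 4 * quadForm₁ a b := by
    simp only [quadForm₁]; nlinarith [sq_nonneg (2 * b - 3 * a)]
  have h₂ : 3 * C ^ 2 < quadForm₂ a b := by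
    simp only [quadForm₂]; nlinarith
  have h₃ : 3 * C ^ 2 < 4 * quadForm₃ a b := by
    simp only [quadForm₃]; nlinarith [sq_nonneg (2 * a - 3 * b)]
  have hprod : 3 * C ^ 2 * (3 * C ^ 2) * (3 * C ^ 2) <
      4 * quadForm₁ a b * quadForm₂ a b * (4 * quadForm₃ a b) := by gcongr
  have hC6 : 0 ≤ C ^ 6 := by positivity
  simp only [sexticForm]
  linarith

variable {M N T L : ℕ} {r s : ℤ} {p k : ℕ} {z : ℤ × ℤ}

lemma mem_dyadicBox : z ∈ dyadicBox M N r s ↔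
    (((M : ℤ) * N < z.1 ∧ z.1 ≤ 2 * (M * N)) ∧ z.1 ≡ r [ZMOD M]) ∧
      ((M : ℤ) * N < z.2 ∧ z.2 ≤ 2 * (M * N)) ∧ z.2 ≡ s [ZMOD M] := by
  simp only [dyadicBox, dyadicProgression, mem_product, mem_filter, mem_Ioc]

lemma pos_of_mem_dyadicBox (hz : z ∈ dyadicBox M N r s) : 0 < z.1 ∧ 0 < z.2 := by
  obtain ⟨⟨⟨h₁, -⟩, -⟩, ⟨h₂, -⟩, -⟩ := mem_dyadicBox.1 hz
  exact ⟨(Int.mul_nonneg (by simp) (by simp)).trans_lt h₁,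
    (Int.mul_nonneg (by simp) (by simp)).trans_lt h₂⟩

lemma isCoprime_sexticForm_of_mem_dyadicBox (hrs : IsCoprime (sexticForm r s) M)
    (hz : z ∈ dyadicBox M N r s) : IsCoprime (sexticForm z.1 z.2) M := by
  have hr := (mem_dyadicBox.1 hz).1.2
  have hs := (mem_dyadicBox.1 hz).2.2
  have hmod : sexticForm r s ≡ sexticForm z.1 z.2 [ZMOD M] := by
    simp only [sexticForm, quadForm₁, quadForm₂, quadForm₃]
    gcongr
  obtain ⟨c, hc⟩ := hmod.dvd
  rw [sub_eq_iff_eq_add'.1 hc]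
  exact hrs.add_mul_left_left c

lemma card_dyadicBox_filter_pow_dvd_quadForm_le (hM : 0 < M) (hp : p.Prime) (hpM : ¬ p ∣ M)
    (hp3 : p ≠ 3) (hk : k ≠ 0) :
    #{z ∈ dyadicBox M N r s | IsCoprime z.1 z.2 ∧ ((p : ℤ) ^ k ∣ quadForm₁ z.1 z.2 ∨
      (p : ℤ) ^ k ∣ quadForm₂ z.1 z.2 ∨ (p : ℤ) ^ k ∣ quadForm₃ z.1 z.2)} ≤
      6 * (N / p ^ k + 1) * N := by
  have h3 : ¬ (p : ℤ) ∣ 3 := by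
    exact_mod_cast mt (Nat.prime_dvd_prime_iff_eq hp Nat.prime_three).1 hp3
  have h1 : ¬ (p : ℤ) ∣ 1 := (Nat.prime_iff_prime_int.1 hp).not_dvd_one
  have hcount {α β γ : ℤ} := card_dyadicBox_filter_binaryForm_le (N := N) (r := r) (s := s)
    (α := α) (β := β) (γ := γ) hM hp hpM hk
  have hcount₁ := hcount (α := 3) (β := -3) (γ := 1) h3 (by norm_num [discrim, h3])
  have hcount₂ := hcount (α := 1) (β := 1) (γ := 1) h1 (by norm_num [discrim, h3])
  have hcount₃ := hcount (α := 1) (β := -3) (γ := 3) h1 (by norm_num [discrim, h3])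
  have hq₁ (a b : ℤ) : 3 * a ^ 2 + -3 * a * b + 1 * b ^ 2 = quadForm₁ a b := by
    simp only [quadForm₁]; ring
  have hq₂ (a b : ℤ) : 1 * a ^ 2 + 1 * a * b + 1 * b ^ 2 = quadForm₂ a b := by
    simp only [quadForm₂]; ring
  have hq₃ (a b : ℤ) : 1 * a ^ 2 + -3 * a * b + 3 * b ^ 2 = quadForm₃ a b := by
    simp only [quadForm₃]; ring
  simp only [hq₁, hq₂, hq₃] at hcount₁ hcount₂ hcount₃
  simp only [and_or_left, filter_or]
  refine (card_union_le _ _).trans ((Nat.add_le_add_left (card_union_le _ _) _).trans ?_)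
  linarith

lemma exists_prime_dvd_of_not_isCoprime {a b : ℤ} (h : ¬ IsCoprime a b) :
    ∃ p : ℕ, p.Prime ∧ (p : ℤ) ∣ a ∧ (p : ℤ) ∣ b := by
  rw [Int.isCoprime_iff_nat_coprime] at h
  obtain ⟨p, hp, ha, hb⟩ := Nat.Prime.not_coprime_iff_dvd.1 h
  exact ⟨p, hp, Int.natCast_dvd.2 ha, Int.natCast_dvd.2 hb⟩

lemma dvd_sexticForm_of_dvd_of_dvd {a b c : ℤ} (ha : c ∣ a) (hb : c ∣ b) :
    c ∣ sexticForm a b := by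
  have h₂ : c ∣ quadForm₂ a b :=
    dvd_add (dvd_add (dvd_pow ha two_ne_zero) (ha.mul_right b)) (dvd_pow hb two_ne_zero)
  exact (h₂.mul_left _).mul_right _

lemma not_dvd_of_dvd_sexticForm (hrs : IsCoprime (sexticForm r s) M) (hz : z ∈ dyadicBox M N r s)
    (hp : p.Prime) (hpz : (p : ℤ) ∣ sexticForm z.1 z.2) : ¬ p ∣ M := fun hpM =>
  (Nat.prime_iff_prime_int.1 hp).not_isUnit
    ((isCoprime_sexticForm_of_mem_dyadicBox hrs hz).isUnit_of_dvd' hpz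
      (Int.natCast_dvd_natCast.2 hpM))

lemma card_dyadicBox_filter_not_isCoprime_le (hM : 0 < M) (hT : 0 < T)
    (hTM : ∀ p : ℕ, p.Prime → p ≤ T → p ∣ M) (hrs : IsCoprime (sexticForm r s) M) :
    (#{z ∈ dyadicBox M N r s | ¬ IsCoprime z.1 z.2} : ℝ) ≤ 2 * N ^ 2 / T + 4 * M * N := by
  have hcover : ∀ z ∈ {z ∈ dyadicBox M N r s | ¬ IsCoprime z.1 z.2},
      ∃ p ∈ {p ∈ Ioc T (2 * (M * N)) | p.Prime ∧ ¬ p ∣ M},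
        z ∈ {z ∈ dyadicBox M N r s | (p : ℤ) ∣ z.1 ∧ (p : ℤ) ∣ z.2} := by
    intro z hz
    obtain ⟨hzbox, hz⟩ := mem_filter.1 hz
    obtain ⟨p, hp, hpa, hpb⟩ := exists_prime_dvd_of_not_isCoprime hz
    have hpM := not_dvd_of_dvd_sexticForm hrs hzbox hp (dvd_sexticForm_of_dvd_of_dvd hpa hpb)
    have hpL : (p : ℤ) ≤ 2 * (M * N) :=
      (Int.le_of_dvd (pos_of_mem_dyadicBox hzbox).1 hpa).trans (mem_dyadicBox.1 hzbox).1.1.2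
    exact ⟨p, mem_filter.2 ⟨mem_Ioc.2 ⟨not_le.1 (mt (hTM p hp) hpM), by exact_mod_cast hpL⟩,
      hp, hpM⟩, mem_filter.2 ⟨hzbox, hpa, hpb⟩⟩
  refine (card_le_of_cover_inv_sq (A := 2 * N ^ 2) (B := 2) hT (filter_subset _ _) hcover
    (by positivity) (by norm_num) fun p hp => ?_).trans_eq (by push_cast; ring)
  obtain ⟨-, hp, hpM⟩ := mem_filter.1 hp
  calc _ ≤ ((N / p : ℕ) + 1 : ℝ) ^ 2 := by
        exact_mod_cast card_dyadicBox_filter_common_dvd_le hM hp hpM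
    _ ≤ ((N : ℝ) / p + 1) ^ 2 := by gcongr; exact Nat.cast_div_le
    _ ≤ 2 * (((N : ℝ) / p) ^ 2 + 1 ^ 2) := add_sq_le
    _ = _ := by ring

lemma exists_prime_cube_dvd_of_not_cubefree {l m n : ℤ}
    (h : ¬ (Cubefree l ∧ Cubefree m ∧ Cubefree n)) :
    ∃ p : ℕ, p.Prime ∧ ((p : ℤ) ^ 3 ∣ l ∨ (p : ℤ) ^ 3 ∣ m ∨ (p : ℤ) ^ 3 ∣ n) := by
  simp only [cubefree_iff_nat_prime] at h
  contrapose! h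
  exact ⟨fun p hp => (h p hp).1, fun p hp => (h p hp).2.1, fun p hp => (h p hp).2.2⟩

lemma dvd_sexticForm_and_pow_three_le_of_dvd_quadForm {B : ℤ} (hz : 0 < z.1 ∧ 0 < z.2)
    (hzB : z.1 ≤ B ∧ z.2 ≤ B) (h : (p : ℤ) ^ 3 ∣ quadForm₁ z.1 z.2 ∨
      (p : ℤ) ^ 3 ∣ quadForm₂ z.1 z.2 ∨ (p : ℤ) ^ 3 ∣ quadForm₃ z.1 z.2) :
    (p : ℤ) ∣ sexticForm z.1 z.2 ∧ (p : ℤ) ^ 3 ≤ 4 * B ^ 2 := by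
  obtain ⟨h₁, h₂, h₃⟩ := quadForm_mem_Ioc hz.1 hz.2 hzB.1 hzB.2
  rw [mem_Ioc] at h₁ h₂ h₃
  have hpow : (p : ℤ) ∣ (p : ℤ) ^ 3 := dvd_pow_self _ three_ne_zero
  rcases h with h | h | h
  · exact ⟨((hpow.trans h).mul_right _).mul_right _, (Int.le_of_dvd h₁.1 h).trans h₁.2⟩
  · exact ⟨((hpow.trans h).mul_left _).mul_right _, (Int.le_of_dvd h₂.1 h).trans h₂.2⟩
  · exact ⟨(hpow.trans h).mul_left _, (Int.le_of_dvd h₃.1 h).trans h₃.2⟩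

open scoped Classical in
lemma card_dyadicBox_filter_not_cubefree_le (hM : 0 < M) (hT : 3 ≤ T)
    (hTM : ∀ p : ℕ, p.Prime → p ≤ T → p ∣ M) (hrs : IsCoprime (sexticForm r s) M)
    (hL : 4 * (2 * (M * N)) ^ 2 ≤ L ^ 3) :
    (#{z ∈ dyadicBox M N r s | IsCoprime z.1 z.2 ∧ ¬ (Cubefree (quadForm₁ z.1 z.2) ∧
      Cubefree (quadForm₂ z.1 z.2) ∧ Cubefree (quadForm₃ z.1 z.2))} : ℝ) ≤
      6 * N ^ 2 / T ^ 2 + 6 * N * L := by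
  have hcover : ∀ z ∈ {z ∈ dyadicBox M N r s | IsCoprime z.1 z.2 ∧
      ¬ (Cubefree (quadForm₁ z.1 z.2) ∧ Cubefree (quadForm₂ z.1 z.2) ∧
        Cubefree (quadForm₃ z.1 z.2))},
      ∃ p ∈ {p ∈ Ioc T L | p.Prime ∧ ¬ p ∣ M},
        z ∈ {z ∈ dyadicBox M N r s | IsCoprime z.1 z.2 ∧ ((p : ℤ) ^ 3 ∣ quadForm₁ z.1 z.2 ∨
          (p : ℤ) ^ 3 ∣ quadForm₂ z.1 z.2 ∨ (p : ℤ) ^ 3 ∣ quadForm₃ z.1 z.2)} := by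
    intro z hz
    obtain ⟨hzbox, hcop, hz⟩ := mem_filter.1 hz
    obtain ⟨p, hp, hpz⟩ := exists_prime_cube_dvd_of_not_cubefree hz
    obtain ⟨⟨⟨-, h₁⟩, -⟩, ⟨-, h₂⟩, -⟩ := mem_dyadicBox.1 hzbox
    obtain ⟨hpF, hple⟩ := dvd_sexticForm_and_pow_three_le_of_dvd_quadForm
      (pos_of_mem_dyadicBox hzbox) ⟨h₁, h₂⟩ hpz
    have hpM := not_dvd_of_dvd_sexticForm hrs hzbox hp hpF
    have hpL : p ≤ L := le_of_pow_le_pow_left₀ three_ne_zero (Nat.zero_le _) <|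
      le_trans (by exact_mod_cast hple) hL
    exact ⟨p, mem_filter.2 ⟨mem_Ioc.2 ⟨not_le.1 (mt (hTM p hp) hpM), hpL⟩, hp, hpM⟩,
      mem_filter.2 ⟨hzbox, hcop, hpz⟩⟩
  refine (card_le_of_cover_inv_sq (A := 6 * N ^ 2 / T) (B := 6 * N) (by omega)
    (filter_subset _ _) hcover (by positivity) (by positivity) fun p hp => ?_).trans_eq
    (by rw [div_div, ← sq])
  obtain ⟨hpT, hp, hpM⟩ := mem_filter.1 hp
  have hp3 : p ≠ 3 := by rintro rfl; exact hpM (hTM 3 hp hT)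
  have hTp : (T : ℝ) ≤ p := by exact_mod_cast (mem_Ioc.1 hpT).1.le
  have : (0 : ℝ) < T := by exact_mod_cast (by omega : 0 < T)
  have hp0 : (0 : ℝ) < p := by exact_mod_cast hp.pos
  calc _ ≤ 6 * ((N / p ^ 3 : ℕ) + 1 : ℝ) * N := by
        exact_mod_cast card_dyadicBox_filter_pow_dvd_quadForm_le hM hp hpM hp3 three_ne_zero
    _ ≤ 6 * ((N : ℝ) / (T * p ^ 2) + 1) * N := by
        gcongr
        refine Nat.cast_div_le.trans ?_
        push_cast
        rw [pow_succ']
        gcongr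
    _ = 6 * N ^ 2 / T * ((p : ℝ) ^ 2)⁻¹ + 6 * N := by field_simp

end BadPairs

section SmoothRadical

open Nat (primesLE mem_primesLE)

/-- The product of the primes `p ≤ y` dividing `n`, that is, the radical of the `y`-smooth part
of `n`. -/
def smoothRadical (y n : ℕ) : ℕ := ∏ p ∈ primesLE y with p ∣ n, p

lemma pow_dvd_factorial_mul {m : ℕ} (hm : 0 < m) (k : ℕ) : m ^ k ∣ (m * k).factorial := by
  induction k with
  | zero => simp
  | succ k ih =>
    rw [pow_succ, mul_add, mul_one]
    exact (mul_dvd_mul ih (Nat.dvd_factorial hm le_rfl)).trans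
      (Nat.factorial_mul_factorial_dvd_factorial_add _ _)

lemma prod_primesLE_pow_div_dvd_factorial (n : ℕ) :
    ∏ p ∈ primesLE n, p ^ (n / p) ∣ n.factorial := by
  refine prod_dvd_of_isRelPrime (fun p hp q hq hpq => ?_) fun p hp =>
    (pow_dvd_factorial_mul (mem_primesLE.1 hp).2.pos (n / p)).trans
      (Nat.factorial_dvd_factorial (Nat.mul_div_le n p))
  rw [Function.onFun, ← Nat.coprime_iff_isRelPrime]
  exact Nat.Coprime.pow _ _ ((Nat.coprime_primes (mem_primesLE.1 hp).2 (mem_primesLE.1 hq).2).2 hpq)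

lemma sum_primesLE_div_mul_log_le (n : ℕ) :
    ∑ p ∈ primesLE n, ((n / p : ℕ) : ℝ) * Real.log p ≤ n * Real.log n := by
  have hpos : ∀ p ∈ primesLE n, 0 < p ^ (n / p) := fun p hp => pow_pos (mem_primesLE.1 hp).2.pos _
  have hle : ∏ p ∈ primesLE n, p ^ (n / p) ≤ n ^ n :=
    (Nat.le_of_dvd n.factorial_pos (prod_primesLE_pow_div_dvd_factorial n)).trans
      n.factorial_le_pow
  calc ∑ p ∈ primesLE n, ((n / p : ℕ) : ℝ) * Real.log p
      = Real.log (∏ p ∈ primesLE n, p ^ (n / p) : ℕ) := by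
        rw [Nat.cast_prod, Real.log_prod fun p hp => by exact_mod_cast (hpos p hp).ne']
        simp only [Nat.cast_pow, Real.log_pow]
    _ ≤ Real.log (n ^ n : ℕ) :=
        Real.log_le_log (by exact_mod_cast prod_pos hpos) (by exact_mod_cast hle)
    _ = n * Real.log n := by rw [Nat.cast_pow, Real.log_pow]

-- Mertens' first theorem (upper bound): compare `n! ≤ n ^ n` with its prime factorisation, and
-- bound the error in `n / p ≤ ⌊n / p⌋ + 1` by Chebyshev's estimate.
lemma sum_primesLE_log_div_le {n : ℕ} (hn : n ≠ 0) :
    ∑ p ∈ primesLE n, Real.log p / p ≤ Real.log n + Real.log 4 := by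
  have hn0 : (0 : ℝ) < n := by exact_mod_cast hn.bot_lt
  have htheta : ∑ p ∈ primesLE n, Real.log p ≤ Real.log 4 * n := by
    rw [← Chebyshev.theta_eq_sum_primesLE_log]
    exact Chebyshev.theta_le_log4_mul_x hn0.le
  refine le_of_mul_le_mul_left ?_ hn0
  calc n * ∑ p ∈ primesLE n, Real.log p / p
      ≤ ∑ p ∈ primesLE n, (((n / p : ℕ) : ℝ) * Real.log p + Real.log p) := by
        rw [mul_sum]
        refine sum_le_sum fun p _ => ?_
        have hfloor : (n : ℝ) / p ≤ (n / p : ℕ) + 1 := by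
          rw [← Nat.floor_div_eq_div (K := ℝ)]
          exact (Nat.lt_floor_add_one _).le
        calc (n : ℝ) * (Real.log p / p) = n / p * Real.log p := by ring
          _ ≤ ((n / p : ℕ) + 1) * Real.log p := by gcongr
          _ = _ := by ring
    _ ≤ n * Real.log n + Real.log 4 * n := by
        rw [sum_add_distrib]
        exact add_le_add (sum_primesLE_div_mul_log_le n) htheta
    _ = n * (Real.log n + Real.log 4) := by ring

lemma log_smoothRadical (y n : ℕ) :
    Real.log (smoothRadical y n) = ∑ p ∈ primesLE y with p ∣ n, Real.log p := by
  rw [smoothRadical, Nat.cast_prod, Real.log_prod]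
  exact fun p hp => by exact_mod_cast (mem_primesLE.1 (mem_filter.1 hp).1).2.ne_zero

-- Markov's inequality for `log (smoothRadical y (g i))`, whose mean is bounded by Mertens.
lemma card_filter_pow_lt_smoothRadical_mul_le {ι : Type*} (S : Finset ι) (g : ι → ℕ) {y : ℕ}
    (hy : 4 ≤ y) (E : ℕ) {K : ℝ} (hK : 0 ≤ K)
    (hdvd : ∀ p ∈ primesLE y, (#{i ∈ S | p ∣ g i} : ℝ) ≤ K / p) :
    (#{i ∈ S | y ^ E < smoothRadical y (g i)} : ℝ) * E ≤ 2 * K := by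
  have hlog : 0 < Real.log y := Real.log_pos (by exact_mod_cast (by omega : 1 < y))
  have hlog4 : Real.log 4 ≤ Real.log y :=
    Real.log_le_log (by norm_num) (by exact_mod_cast hy)
  refine le_of_mul_le_mul_right ?_ hlog
  calc (#{i ∈ S | y ^ E < smoothRadical y (g i)} : ℝ) * E * Real.log y
      = ∑ i ∈ S with y ^ E < smoothRadical y (g i), Real.log (y ^ E : ℕ) := by
        rw [sum_const, nsmul_eq_mul, Nat.cast_pow, Real.log_pow, mul_assoc]
    _ ≤ ∑ i ∈ S with y ^ E < smoothRadical y (g i), Real.log (smoothRadical y (g i)) := by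
        refine sum_le_sum fun i hi => Real.log_le_log (by positivity) ?_
        exact_mod_cast (mem_filter.1 hi).2.le
    _ ≤ ∑ i ∈ S, Real.log (smoothRadical y (g i)) :=
        sum_le_sum_of_subset_of_nonneg (filter_subset _ _) fun _ _ _ => Real.log_natCast_nonneg _
    _ = ∑ p ∈ primesLE y, #{i ∈ S | p ∣ g i} * Real.log p := by
        simp only [log_smoothRadical, sum_filter]
        rw [sum_comm]
        simp only [← sum_filter, sum_const, nsmul_eq_mul]
    _ ≤ ∑ p ∈ primesLE y, K * (Real.log p / p) := by
        refine sum_le_sum fun p hp => ?_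
        calc _ ≤ K / p * Real.log p :=
              mul_le_mul_of_nonneg_right (hdvd p hp) (Real.log_natCast_nonneg p)
          _ = _ := by ring
    _ ≤ K * (2 * Real.log y) := by
        rw [← mul_sum]
        gcongr
        linarith [sum_primesLE_log_div_le (n := y) (by omega)]
    _ = 2 * K * Real.log y := by ring

variable {M N : ℕ} {r s : ℤ}

lemma card_dyadicBox_filter_dvd_sexticForm_le (hM : 0 < M) (h3M : 3 ∣ M)
    (hrs : IsCoprime (sexticForm r s) M) {p : ℕ} (hp : p.Prime) (hpN : p ≤ N) :
    (#{z ∈ dyadicBox M N r s | IsCoprime z.1 z.2 ∧ (p : ℤ) ∣ sexticForm z.1 z.2} : ℝ) ≤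
      12 * N ^ 2 / p := by
  by_cases hpM : p ∣ M
  · rw [filter_false_of_mem fun z hz hdvd => not_dvd_of_dvd_sexticForm hrs hz hp hdvd.2 hpM]
    simp only [card_empty, Nat.cast_zero]
    positivity
  have hp0 : (0 : ℝ) < p := by exact_mod_cast hp.pos
  have hp3 : p ≠ 3 := by rintro rfl; exact hpM h3M
  have hsub := card_dyadicBox_filter_pow_dvd_quadForm_le (N := N) (r := r) (s := s) hM hp hpM hp3
    one_ne_zero
  have hpZ := Nat.prime_iff_prime_int.1 hp
  have hfactor (a b : ℤ) : (p : ℤ) ∣ quadForm₁ a b ∨ (p : ℤ) ∣ quadForm₂ a b ∨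
      (p : ℤ) ∣ quadForm₃ a b ↔ (p : ℤ) ∣ sexticForm a b := by
    rw [sexticForm, hpZ.dvd_mul, hpZ.dvd_mul, or_assoc]
  simp only [pow_one, hfactor] at hsub
  calc _ ≤ 6 * ((N / p : ℕ) + 1 : ℝ) * N := by exact_mod_cast hsub
    _ ≤ 6 * ((N : ℝ) / p + N / p) * N := by
        gcongr
        · exact Nat.cast_div_le
        · rw [one_le_div hp0]
          exact_mod_cast hpN
    _ = 12 * N ^ 2 / p := by ring

lemma card_dyadicBox_filter_pow_lt_smoothRadical_le (hM : 0 < M) (h3M : 3 ∣ M)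
    (hrs : IsCoprime (sexticForm r s) M) {y E : ℕ} (hy : 4 ≤ y) (hyN : y ≤ N) (hE : 0 < E) :
    (#{z ∈ dyadicBox M N r s | IsCoprime z.1 z.2 ∧
      y ^ E < smoothRadical y (sexticForm z.1 z.2).natAbs} : ℝ) ≤ 24 * N ^ 2 / E := by
  rw [le_div_iff₀ (by exact_mod_cast hE), ← filter_filter]
  refine (card_filter_pow_lt_smoothRadical_mul_le _ _ hy E (K := 12 * N ^ 2) (by positivity)
    fun p hp => ?_).trans_eq (by ring)
  obtain ⟨hpy, hp⟩ := mem_primesLE.1 hp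
  simp only [filter_filter, ← Int.natCast_dvd]
  exact card_dyadicBox_filter_dvd_sexticForm_le hM h3M hrs hp (hpy.trans hyN)

end SmoothRadical

section Multiplicity

lemma eq_and_eq_of_isCoprime_of_mul_eq_mul {a b c d : ℤ} (ha : 0 < a) (hc : 0 < c)
    (hab : IsCoprime a b) (hcd : IsCoprime c d) (h : a * d = b * c) : a = c ∧ b = d := by
  obtain rfl : a = c := dvd_antisymm_of_normalize_eq (Int.normalize_of_nonneg ha.le)
    (Int.normalize_of_nonneg hc.le) (hab.dvd_of_dvd_mul_left (Dvd.intro _ h))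
    (hcd.dvd_of_dvd_mul_right (Dvd.intro_left _ h.symm))
  exact ⟨rfl, (mul_left_cancel₀ ha.ne' (h.trans (mul_comm b a))).symm⟩

lemma eq_of_forall_prime_dvd_cross_sub {P : Finset ℕ} (hP : ∀ p ∈ P, p.Prime) {B : ℕ}
    (hB : B ^ 2 < ∏ p ∈ P, p) {z w : ℤ × ℤ} (hz₁ : z.1 ∈ Ioc 0 (B : ℤ)) (hz₂ : z.2 ∈ Ioc 0 (B : ℤ))
    (hw₁ : w.1 ∈ Ioc 0 (B : ℤ)) (hw₂ : w.2 ∈ Ioc 0 (B : ℤ)) (hz : IsCoprime z.1 z.2)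
    (hw : IsCoprime w.1 w.2) (hdvd : ∀ p ∈ P, (p : ℤ) ∣ z.1 * w.2 - z.2 * w.1) : z = w := by
  rw [mem_Ioc] at hz₁ hz₂ hw₁ hw₂
  have hprod : ((∏ p ∈ P, p : ℕ) : ℤ) ∣ z.1 * w.2 - z.2 * w.1 :=
    Int.natCast_dvd.2 <| prod_primes_dvd _ (fun p hp => (hP p hp).prime)
      fun p hp => Int.natCast_dvd.1 (hdvd p hp)
  have hcross : |z.1 * w.2 - z.2 * w.1| < (∏ p ∈ P, p : ℕ) := by
    refine lt_of_le_of_lt ?_ (by exact_mod_cast hB : (B : ℤ) ^ 2 < (∏ p ∈ P, p : ℕ))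
    have h₁ : z.1 * w.2 ≤ B * B := mul_le_mul hz₁.2 hw₂.2 hw₂.1.le (by positivity)
    have h₂ : z.2 * w.1 ≤ B * B := mul_le_mul hz₂.2 hw₁.2 hw₁.1.le (by positivity)
    rw [abs_le]
    constructor <;> nlinarith [mul_pos hz₁.1 hw₂.1, mul_pos hz₂.1 hw₁.1]
  have heq := sub_eq_zero.1 (Int.eq_zero_of_abs_lt_dvd hprod hcross)
  exact Prod.ext_iff.2 (eq_and_eq_of_isCoprime_of_mul_eq_mul hz₁.1 hw₁.1 hz hw heq)

-- A coprime pair of size at most `B` is determined by its slopes modulo the primes of `P`.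
lemma card_le_pow_card_of_slope_mem {P : Finset ℕ} (hP : ∀ p ∈ P, p.Prime)
    (R : ∀ p, Finset (ZMod p)) {k : ℕ} (hR : ∀ p ∈ P, #(R p) ≤ k) {B : ℕ}
    (hB : B ^ 2 < ∏ p ∈ P, p) {S : Finset (ℤ × ℤ)}
    (hS : ∀ z ∈ S, z.1 ∈ Ioc 0 (B : ℤ) ∧ z.2 ∈ Ioc 0 (B : ℤ) ∧ IsCoprime z.1 z.2)
    (hslope : ∀ z ∈ S, ∀ p ∈ P, ∃ t ∈ R p, (z.1 : ZMod p) = t * z.2) : #S ≤ k ^ #P := by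
  choose! τ hτR hτ using hslope
  have hinj : Set.InjOn (fun z (p : ℕ) (_ : p ∈ P) => τ z p) S := by
    intro z hz w hw hzw
    obtain ⟨hz₁, hz₂, hzcop⟩ := hS z hz
    obtain ⟨hw₁, hw₂, hwcop⟩ := hS w hw
    refine eq_of_forall_prime_dvd_cross_sub hP hB hz₁ hz₂ hw₁ hw₂ hzcop hwcop fun p hp => ?_
    have hτzw : τ z p = τ w p := congrFun (congrFun hzw p) hp
    rw [← ZMod.intCast_zmod_eq_zero_iff_dvd]
    push_cast
    rw [hτ z hz p hp, hτ w hw p hp, hτzw]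
    ring
  calc #S ≤ #(P.pi R) := card_le_card_of_injOn _
        (fun z hz => mem_coe.2 (mem_pi.2 fun p hp => hτR z hz p hp)) hinj
    _ = ∏ p ∈ P, #(R p) := card_pi _ _
    _ ≤ k ^ #P := prod_le_pow_card _ _ _ hR

lemma exists_sexticForm_one_eq_zero {K : Type*} [Field K] (h3 : (3 : K) ≠ 0) {a b : K}
    (hab : a ≠ 0 ∨ b ≠ 0) (h : sexticForm a b = 0) : ∃ t, sexticForm t 1 = 0 ∧ a = t * b := by
  have hb : b ≠ 0 := by
    rintro rfl
    have ha : 3 * a ^ 6 = 0 := by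
      rw [← h]; simp only [sexticForm, quadForm₁, quadForm₂, quadForm₃]; ring
    simp_all
  refine ⟨a / b, ?_, (div_mul_cancel₀ a hb).symm⟩
  have hhom : sexticForm a b = b ^ 6 * sexticForm (a / b) 1 := by
    simp only [sexticForm, quadForm₁, quadForm₂, quadForm₃]; field_simp
  exact (mul_eq_zero.1 (hhom ▸ h)).resolve_left (pow_ne_zero 6 hb)

open Polynomial in
lemma exists_finset_roots_sexticForm {K : Type*} [Field K] (h3 : (3 : K) ≠ 0) :
    ∃ R : Finset K, #R ≤ 6 ∧ ∀ t, sexticForm t 1 = 0 → t ∈ R := by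
  classical
  set f : K[X] := sexticForm X 1 with hf
  have heval (t : K) : f.eval t = sexticForm t 1 := by
    simp [hf, sexticForm, quadForm₁, quadForm₂, quadForm₃]
  have hf0 : f ≠ 0 := fun h => h3 <| by
    simpa [h, sexticForm, quadForm₁, quadForm₂, quadForm₃] using (heval 0).symm
  have hdeg : f.natDegree ≤ 6 := by
    simp only [hf, sexticForm, quadForm₁, quadForm₂, quadForm₃]
    compute_degree
  refine ⟨f.roots.toFinset, (Multiset.toFinset_card_le _).trans (f.card_roots'.trans hdeg),
    fun t ht => ?_⟩
  rwa [Multiset.mem_toFinset, mem_roots hf0, IsRoot.def, heval]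

lemma exists_slopes_of_dvd_sexticForm {p : ℕ} (hp : p.Prime) (hp3 : p ≠ 3) :
    ∃ R : Finset (ZMod p), #R ≤ 6 ∧ ∀ a b : ℤ, IsCoprime a b → (p : ℤ) ∣ sexticForm a b →
      ∃ t ∈ R, (a : ZMod p) = t * b := by
  have := Fact.mk hp
  have h3 : (3 : ZMod p) ≠ 0 := fun h =>
    hp3 ((Nat.prime_dvd_prime_iff_eq hp Nat.prime_three).1
      ((ZMod.natCast_eq_zero_iff 3 p).1 (by exact_mod_cast h)))
  obtain ⟨R, hR, hroots⟩ := exists_finset_roots_sexticForm h3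
  refine ⟨R, hR, fun a b hab hdvd => ?_⟩
  have hzero : sexticForm (a : ZMod p) b = 0 := by
    rw [← ZMod.intCast_zmod_eq_zero_iff_dvd] at hdvd
    simpa [sexticForm, quadForm₁, quadForm₂, quadForm₃] using hdvd
  have hne : (a : ZMod p) ≠ 0 ∨ (b : ZMod p) ≠ 0 := by
    simpa using (hab.map (Int.castRingHom (ZMod p))).ne_zero_or_ne_zero
  obtain ⟨t, ht, hat⟩ := exists_sexticForm_one_eq_zero h3 hne hzero
  exact ⟨t, hroots t ht, hat⟩

lemma Cubefree.ne_zero {d : ℤ} (h : Cubefree d) : d ≠ 0 := by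
  rintro rfl
  exact h 2 Int.prime_two (dvd_zero _)

lemma Cubefree.natAbs_dvd_sq_prod_primeFactors {d : ℤ} (h : Cubefree d) :
    d.natAbs ∣ (∏ p ∈ d.natAbs.primeFactors, p) ^ 2 := by
  have hd : d.natAbs ≠ 0 := Int.natAbs_ne_zero.2 h.ne_zero
  conv_lhs => rw [← Nat.prod_factorization_pow_eq_self hd]
  rw [← prod_pow]
  refine prod_dvd_prod_of_dvd _ _ fun p hp => pow_dvd_pow p ?_
  have hpp := Nat.prime_of_mem_primeFactors hp
  by_contra! hlt
  refine cubefree_iff_nat_prime.1 h p hpp (Int.natCast_dvd.2 ?_)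
  exact_mod_cast (hpp.pow_dvd_iff_le_factorization hd).2 hlt

lemma smoothRadical_mul_prod_filter_lt {n : ℕ} (hn : n ≠ 0) (y : ℕ) :
    smoothRadical y n * ∏ p ∈ n.primeFactors with y < p, p = ∏ p ∈ n.primeFactors, p := by
  have hsmooth : {p ∈ Nat.primesLE y | p ∣ n} = {p ∈ n.primeFactors | p ≤ y} := by
    ext p
    simp only [mem_filter, Nat.mem_primesLE, Nat.mem_primeFactors]
    tauto
  simp only [smoothRadical, hsmooth, ← not_le]
  exact prod_filter_mul_prod_filter_not _ _ _

lemma Cubefree.lt_prod_filter_lt {d : ℤ} (h : Cubefree d) {y C Q : ℕ}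
    (hsmooth : smoothRadical y d.natAbs ≤ Q) (hlow : (C * Q) ^ 2 < d.natAbs) :
    C < ∏ p ∈ d.natAbs.primeFactors with y < p, p := by
  by_contra! hle
  refine hlow.not_ge ?_
  calc d.natAbs ≤ (∏ p ∈ d.natAbs.primeFactors, p) ^ 2 :=
        Nat.le_of_dvd (pow_pos (Nat.pos_of_ne_zero (prod_ne_zero_iff.2 fun p hp =>
          (Nat.prime_of_mem_primeFactors hp).ne_zero)) 2) h.natAbs_dvd_sq_prod_primeFactors
    _ = (smoothRadical y d.natAbs * ∏ p ∈ d.natAbs.primeFactors with y < p, p) ^ 2 := by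
        rw [smoothRadical_mul_prod_filter_lt (Int.natAbs_ne_zero.2 h.ne_zero)]
    _ ≤ (Q * C) ^ 2 := by gcongr
    _ = (C * Q) ^ 2 := by rw [mul_comm]

lemma card_primeFactors_filter_lt_le {n y D : ℕ} (hn : n ≠ 0) (hy : 1 < y) (hle : n ≤ y ^ D) :
    #{p ∈ n.primeFactors | y < p} ≤ D := by
  rw [← Nat.pow_le_pow_iff_right hy]
  calc y ^ #{p ∈ n.primeFactors | y < p} ≤ ∏ p ∈ n.primeFactors with y < p, p :=
        pow_card_le_prod _ _ _ fun p hp => (mem_filter.1 hp).2.le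
    _ ≤ ∏ p ∈ n.primeFactors, p :=
        prod_le_prod_of_subset_of_one_le' (filter_subset _ _) fun p hp _ =>
          (Nat.prime_of_mem_primeFactors hp).one_le
    _ ≤ n := Nat.le_of_dvd (Nat.pos_of_ne_zero hn) n.prod_primeFactors_dvd
    _ ≤ y ^ D := hle

lemma card_le_six_pow_of_sexticForm_eq {d : ℤ} (hd : Cubefree d) (h3 : ¬ 3 ∣ d) {y B Q D : ℕ}
    (hy : 1 < y) (hsmooth : smoothRadical y d.natAbs ≤ Q) (hlow : (B ^ 2 * Q) ^ 2 < d.natAbs)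
    (hup : d.natAbs ≤ y ^ D) {S : Finset (ℤ × ℤ)}
    (hS : ∀ z ∈ S, z.1 ∈ Ioc 0 (B : ℤ) ∧ z.2 ∈ Ioc 0 (B : ℤ) ∧ IsCoprime z.1 z.2)
    (hSd : ∀ z ∈ S, sexticForm z.1 z.2 = d) : #S ≤ 6 ^ D := by
  set P := {p ∈ d.natAbs.primeFactors | y < p}
  have hprime : ∀ p ∈ P, p.Prime := fun p hp =>
    Nat.prime_of_mem_primeFactors (mem_filter.1 hp).1
  have hdvd : ∀ p ∈ P, (p : ℤ) ∣ d := fun p hp =>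
    Int.natCast_dvd.2 (Nat.dvd_of_mem_primeFactors (mem_filter.1 hp).1)
  have hne3 : ∀ p ∈ P, p ≠ 3 := by rintro p hp rfl; exact h3 (hdvd 3 hp)
  choose! R hR hslope using fun p (hp : p ∈ P) =>
    exists_slopes_of_dvd_sexticForm (hprime p hp) (hne3 p hp)
  calc #S ≤ 6 ^ #P := card_le_pow_card_of_slope_mem hprime R hR (hd.lt_prod_filter_lt hsmooth hlow)
        hS fun z hz p hp => hslope p hp _ _ (hS z hz).2.2 (hSd z hz ▸ hdvd p hp)
    _ ≤ 6 ^ D := Nat.pow_le_pow_right (by norm_num)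
        (card_primeFactors_filter_lt_le (Int.natAbs_ne_zero.2 hd.ne_zero) hy hup)

end Multiplicity

section GoodPairs

open scoped Classical in
/-- The pairs `(a, b)` of the box `dyadicBox M N r s` from which cube-free values are produced:
coprime, with cube-free values of the three quadratic forms, and such that the primes up to `y`
dividing `sexticForm a b` have product at most `Q`. -/
noncomputable def goodPairs (M N : ℕ) (r s : ℤ) (y Q : ℕ) : Finset (ℤ × ℤ) :=
  {z ∈ dyadicBox M N r s | IsCoprime z.1 z.2 ∧
    (Cubefree (quadForm₁ z.1 z.2) ∧ Cubefree (quadForm₂ z.1 z.2) ∧ Cubefree (quadForm₃ z.1 z.2)) ∧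
    smoothRadical y (sexticForm z.1 z.2).natAbs ≤ Q}

variable {M N T L y E Q D : ℕ} {r s : ℤ} {z : ℤ × ℤ}

lemma mem_goodPairs : z ∈ goodPairs M N r s y Q ↔ z ∈ dyadicBox M N r s ∧ IsCoprime z.1 z.2 ∧
    (Cubefree (quadForm₁ z.1 z.2) ∧ Cubefree (quadForm₂ z.1 z.2) ∧ Cubefree (quadForm₃ z.1 z.2)) ∧
    smoothRadical y (sexticForm z.1 z.2).natAbs ≤ Q := by
  classical
  exact mem_filter

lemma sq_le_card_goodPairs_add (hM : 0 < M) (hT : 3 ≤ T)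
    (hTM : ∀ p : ℕ, p.Prime → p ≤ T → p ∣ M) (hrs : IsCoprime (sexticForm r s) M)
    (hL : 4 * (2 * (M * N)) ^ 2 ≤ L ^ 3) (hy : 4 ≤ y) (hyN : y ≤ N) (hE : 0 < E) :
    (N : ℝ) ^ 2 ≤ #(goodPairs M N r s y (y ^ E)) + (2 * N ^ 2 / T + 4 * M * N) +
      (6 * N ^ 2 / T ^ 2 + 6 * N * L) + 24 * N ^ 2 / E := by
  classical
  have hcop := card_dyadicBox_filter_not_isCoprime_le (N := N) hM (by omega) hTM hrs
  have hcube := card_dyadicBox_filter_not_cubefree_le hM hT hTM hrs hL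
  have hsmooth := card_dyadicBox_filter_pow_lt_smoothRadical_le hM (hTM 3 Nat.prime_three hT) hrs
    hy hyN hE
  have hcover : dyadicBox M N r s ⊆ goodPairs M N r s y (y ^ E) ∪
      {z ∈ dyadicBox M N r s | ¬ IsCoprime z.1 z.2} ∪
      {z ∈ dyadicBox M N r s | IsCoprime z.1 z.2 ∧ ¬ (Cubefree (quadForm₁ z.1 z.2) ∧
        Cubefree (quadForm₂ z.1 z.2) ∧ Cubefree (quadForm₃ z.1 z.2))} ∪
      {z ∈ dyadicBox M N r s | IsCoprime z.1 z.2 ∧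
        y ^ E < smoothRadical y (sexticForm z.1 z.2).natAbs} := by
    intro z hz
    simp only [mem_union, mem_goodPairs, mem_filter, ← not_le]
    tauto
  have hcard := (card_le_card hcover).trans ((card_union_le _ _).trans (Nat.add_le_add_right
    ((card_union_le _ _).trans (Nat.add_le_add_right (card_union_le _ _) _)) _))
  rw [card_dyadicBox hM] at hcard
  have hcardR := (Nat.cast_le (α := ℝ)).2 hcard
  push_cast at hcardR
  linarith

lemma isAdmissible_of_mem_goodPairs (hMN : 0 < M * N) (hM : 42 ∣ M)
    (hrs : IsCoprime (sexticForm r s) M) (hz : z ∈ goodPairs M N r s y Q) :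
    IsAdmissible z.1 z.2 := by
  obtain ⟨hbox, hcop, ⟨h₁, h₂, h₃⟩, -⟩ := mem_goodPairs.1 hz
  obtain ⟨⟨⟨hlt₁, -⟩, -⟩, ⟨hlt₂, -⟩, -⟩ := mem_dyadicBox.1 hbox
  have hMN' : (1 : ℤ) ≤ M * N := by exact_mod_cast hMN
  exact
    { one_lt_left := hMN'.trans_lt hlt₁
      one_lt_right := hMN'.trans_lt hlt₂
      isCoprime := hcop
      isCoprime_sexticForm := (isCoprime_sexticForm_of_mem_dyadicBox hrs
        hbox).of_isCoprime_of_dvd_right (by exact_mod_cast hM)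
      cubefree_quadForm₁ := h₁
      cubefree_quadForm₂ := h₂
      cubefree_quadForm₃ := h₃ }

lemma card_goodPairs_filter_sexticForm_eq_le (hMN : 0 < M * N) (hM : 42 ∣ M)
    (hrs : IsCoprime (sexticForm r s) M) (hy : 1 < y)
    (hlow : ((2 * (M * N)) ^ 2 * Q) ^ 2 ≤ (M * N) ^ 6) (hup : 64 * (2 * (M * N)) ^ 6 ≤ y ^ D)
    (d : ℤ) : #{z ∈ goodPairs M N r s y Q | sexticForm z.1 z.2 = d} ≤ 6 ^ D := by
  rcases eq_empty_or_nonempty {z ∈ goodPairs M N r s y Q | sexticForm z.1 z.2 = d} with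
    hempty | ⟨w, hw⟩
  · simp [hempty]
  obtain ⟨hwgood, rfl⟩ := mem_filter.1 hw
  have hadm := isAdmissible_of_mem_goodPairs hMN hM hrs hwgood
  obtain ⟨hwbox, -, -, hsmooth⟩ := mem_goodPairs.1 hwgood
  obtain ⟨⟨⟨hlt₁, hle₁⟩, -⟩, ⟨hlt₂, hle₂⟩, -⟩ := mem_dyadicBox.1 hwbox
  have hlower := pow_six_lt_sexticForm (C := M * N) (by positivity) hlt₁ hlt₂
  have hupper := mem_Ioc.1 (sexticForm_mem_Ioc (pos_of_mem_dyadicBox hwbox).1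
    (pos_of_mem_dyadicBox hwbox).2 hle₁ hle₂)
  have h3 : ¬ 3 ∣ sexticForm w.1 w.2 := fun h3 =>
    absurd (hadm.isCoprime_sexticForm.isUnit_of_dvd' h3 (by norm_num)) (by decide)
  refine card_le_six_pow_of_sexticForm_eq (B := 2 * (M * N))
    (hadm.cubefree.of_dvd (dvd_mul_left _ _)) h3 hy hsmooth (hlow.trans_lt ?_) (le_trans ?_ hup)
    (fun z hz => ?_) fun z hz => (mem_filter.1 hz).2
  · zify
    rwa [abs_of_pos hupper.1]
  · zify
    rw [abs_of_pos hupper.1]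
    exact hupper.2
  · obtain ⟨hzbox, hzcop, -⟩ := mem_goodPairs.1 (mem_filter.1 hz).1
    obtain ⟨⟨⟨-, hz₁⟩, -⟩, ⟨-, hz₂⟩, -⟩ := mem_dyadicBox.1 hzbox
    have hpos := pos_of_mem_dyadicBox hzbox
    exact ⟨mem_Ioc.2 ⟨hpos.1, by exact_mod_cast hz₁⟩, mem_Ioc.2 ⟨hpos.2, by exact_mod_cast hz₂⟩,
      hzcop⟩

end GoodPairs

section Counting

lemma isCoprime_sexticForm_one_five : IsCoprime (sexticForm 1 5) ((210 : ℕ) : ℤ) := by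
  rw [Int.isCoprime_iff_gcd_eq_one]
  decide

lemma dvd_of_prime_of_le_ten {p : ℕ} (hp : p.Prime) (hp10 : p ≤ 10) : p ∣ 210 := by
  interval_cases p <;> revert hp <;> norm_num

-- With modulus `210 = 2 * 3 * 5 * 7`, the three excluded proportions are about `2 / 10`,
-- `6 / 10 ^ 2` and `24 / 100`.
lemma sq_le_four_mul_card_goodPairs {y : ℕ} (hy : 4 ≤ y) :
    ((y : ℝ) ^ 100) ^ 2 ≤ 4 * #(goodPairs 210 (y ^ 100) 1 5 y (y ^ 100)) := by
  have hyN : y ≤ y ^ 100 := Nat.le_self_pow (by norm_num) y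
  have hNR : (4 : ℝ) ^ 100 ≤ (y : ℝ) ^ 100 := by gcongr; exact_mod_cast hy
  have hNlarge : 4 ^ 100 ≤ y ^ 100 := Nat.pow_le_pow_left hy 100
  have hL : 4 * (2 * (210 * y ^ 100)) ^ 2 ≤ (y ^ 100 / 1000) ^ 3 := by
    generalize y ^ 100 = N at *
    have hLlarge : 10 ^ 20 ≤ N / 1000 := by omega
    have hNL : N ≤ 1001 * (N / 1000) := by omega
    calc 4 * (2 * (210 * N)) ^ 2 ≤ 4 * (2 * (210 * (1001 * (N / 1000)))) ^ 2 := by gcongr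
      _ = 4 * (2 * (210 * 1001)) ^ 2 * (N / 1000) ^ 2 := by ring
      _ ≤ N / 1000 * (N / 1000) ^ 2 := by gcongr; omega
      _ = (N / 1000) ^ 3 := by ring
  have hLN : ((y ^ 100 / 1000 : ℕ) : ℝ) ≤ (y : ℝ) ^ 100 / 1000 := by
    exact_mod_cast Nat.cast_div_le (α := ℝ) (m := y ^ 100) (n := 1000)
  have hcard := sq_le_card_goodPairs_add (T := 10) (E := 100) (by norm_num) (by norm_num)
    (fun _ => dvd_of_prime_of_le_ten) isCoprime_sexticForm_one_five hL hy hyN (by norm_num)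
  push_cast at hcard
  generalize (y : ℝ) ^ 100 = N at *
  have hNL := mul_le_mul_of_nonneg_left hLN (by linarith : 0 ≤ 6 * N)
  have hNN := mul_le_mul_of_nonneg_left hNR (by linarith : 0 ≤ N)
  linarith

lemma card_goodPairs_le_six_pow_mul_card_image {y : ℕ} (hy : 4 ≤ y) :
    #(goodPairs 210 (y ^ 100) 1 5 y (y ^ 100)) ≤
      6 ^ 700 * #((goodPairs 210 (y ^ 100) 1 5 y (y ^ 100)).image
        fun z => 63 * sexticForm z.1 z.2) := by
  refine card_le_mul_card_image _ _ fun d hd => ?_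
  obtain ⟨w, -, rfl⟩ := mem_image.1 hd
  simp only [mul_right_inj' (by norm_num : (63 : ℤ) ≠ 0)]
  have hup : 64 * (2 * (210 * y ^ 100)) ^ 6 ≤ y ^ 700 := by
    calc 64 * (2 * (210 * y ^ 100)) ^ 6 = 64 * 420 ^ 6 * y ^ 600 := by ring
      _ ≤ 4 ^ 100 * y ^ 600 := by gcongr; norm_num
      _ ≤ y ^ 100 * y ^ 600 := by gcongr
      _ = y ^ 700 := by ring
  have hlow : ((2 * (210 * y ^ 100)) ^ 2 * y ^ 100) ^ 2 ≤ (210 * y ^ 100) ^ 6 := by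
    calc ((2 * (210 * y ^ 100)) ^ 2 * y ^ 100) ^ 2 = 420 ^ 4 * y ^ 600 := by ring
      _ ≤ 210 ^ 6 * y ^ 600 := Nat.mul_le_mul_right _ (by norm_num)
      _ = (210 * y ^ 100) ^ 6 := by ring
  exact card_goodPairs_filter_sexticForm_eq_le (by positivity) (by norm_num)
    isCoprime_sexticForm_one_five (by omega) hlow hup _

lemma exists_admissible_values {y : ℕ} (hy : 4 ≤ y) :
    ∃ V : Finset ℤ, (∀ d ∈ V, Cubefree d ∧ (|d| : ℝ) ≤ 63 * 64 * 420 ^ 6 * (y : ℝ) ^ 600 ∧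
      2 ≤ Module.rank ℤ (W12 d).Point) ∧ (y : ℝ) ^ 200 ≤ 4 * 6 ^ 700 * #V := by
  refine ⟨(goodPairs 210 (y ^ 100) 1 5 y (y ^ 100)).image fun z => 63 * sexticForm z.1 z.2,
    fun d hd => ?_, ?_⟩
  · obtain ⟨z, hz, rfl⟩ := mem_image.1 hd
    have hadm := isAdmissible_of_mem_goodPairs (by positivity) (by norm_num)
      isCoprime_sexticForm_one_five hz
    refine ⟨hadm.cubefree, ?_, hadm.two_le_rank⟩
    have hbox := (mem_goodPairs.1 hz).1
    obtain ⟨⟨⟨-, hle₁⟩, -⟩, ⟨-, hle₂⟩, -⟩ := mem_dyadicBox.1 hbox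
    obtain ⟨hpos, hle⟩ := mem_Ioc.1 (sexticForm_mem_Ioc (pos_of_mem_dyadicBox hbox).1
      (pos_of_mem_dyadicBox hbox).2 hle₁ hle₂)
    have hbound : |63 * sexticForm z.1 z.2| ≤ 63 * 64 * 420 ^ 6 * (y : ℤ) ^ 600 := by
      rw [abs_of_pos (by positivity)]
      calc 63 * sexticForm z.1 z.2 ≤ 63 * (64 * (2 * ((210 : ℕ) * (y ^ 100 : ℕ))) ^ 6) := by gcongr
        _ = 63 * 64 * 420 ^ 6 * (y : ℤ) ^ 600 := by push_cast; ring
    exact_mod_cast hbound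
  · have hmult := (Nat.cast_le (α := ℝ)).2 (card_goodPairs_le_six_pow_mul_card_image hy)
    rw [Nat.cast_mul, Nat.cast_pow, Nat.cast_ofNat] at hmult
    rw [mul_assoc, show 200 = 100 * 2 from rfl, pow_mul]
    exact (sq_le_four_mul_card_goodPairs hy).trans (mul_le_mul_of_nonneg_left hmult zero_le_four)

lemma card_le_S₂ {X : ℝ} {V : Finset ℤ}
    (hV : ∀ d ∈ V, Cubefree d ∧ (|d| : ℝ) ≤ X ∧ 2 ≤ Module.rank ℤ (W12 d).Point) : #V ≤ S₂ X := by
  rw [S₂, ← Set.ncard_coe_finset]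
  refine Set.ncard_le_ncard (fun d hd => hV d hd) ((Set.finite_Icc (-⌊X⌋) ⌊X⌋).subset ?_)
  rintro d ⟨-, hd, -⟩
  rw [← Int.cast_abs] at hd
  exact abs_le.1 (Int.le_floor.2 hd)

lemma exists_mul_rpow_le_of_pow_le {f : ℝ → ℝ} {A C : ℝ} (hA : 0 < A) (hC : 0 < C) {Y₀ k m : ℕ}
    (hm : m ≠ 0) (h : ∀ y : ℕ, Y₀ ≤ y → ∀ X, C * (y : ℝ) ^ m ≤ X → (y : ℝ) ^ k ≤ A * f X) :
    ∃ c : ℝ, 0 < c ∧ ∃ X₀ : ℝ, ∀ X : ℝ, X₀ ≤ X → c * X ^ ((k : ℝ) / m) ≤ f X := by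
  refine ⟨(C ^ ((k : ℝ) / m) * 2 ^ k * A)⁻¹, by positivity, C * (Y₀ + 1) ^ m, fun X hX => ?_⟩
  obtain ⟨x, hx0, rfl⟩ : ∃ x : ℝ, 0 ≤ x ∧ X = C * x ^ m := by
    have hXC : 0 ≤ X / C := div_nonneg (le_trans (by positivity) hX) hC.le
    refine ⟨(X / C) ^ (m : ℝ)⁻¹, by positivity, ?_⟩
    rw [Real.rpow_inv_natCast_pow hXC hm, mul_div_cancel₀ X hC.ne']
  have hYx : (Y₀ : ℝ) + 1 ≤ x :=
    le_of_pow_le_pow_left₀ hm hx0 (le_of_mul_le_mul_left hX hC)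
  have hfloor := Nat.floor_le hx0
  have hlt := Nat.lt_floor_add_one x
  have hone : (1 : ℝ) ≤ ⌊x⌋₊ := by
    exact_mod_cast Nat.le_floor (by push_cast; linarith [Y₀.cast_nonneg (α := ℝ)])
  have hpow : (C * x ^ m) ^ ((k : ℝ) / m) = C ^ ((k : ℝ) / m) * x ^ k := by
    rw [Real.mul_rpow hC.le (by positivity), ← Real.rpow_natCast_mul hx0,
      mul_div_cancel₀ _ (by exact_mod_cast hm), Real.rpow_natCast]
  rw [inv_mul_le_iff₀ (by positivity), hpow]
  calc C ^ ((k : ℝ) / m) * x ^ k ≤ C ^ ((k : ℝ) / m) * (2 * ⌊x⌋₊) ^ k := by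
        gcongr
        linarith
    _ = C ^ ((k : ℝ) / m) * 2 ^ k * (⌊x⌋₊ : ℝ) ^ k := by rw [mul_pow]; ring
    _ ≤ C ^ ((k : ℝ) / m) * 2 ^ k * (A * f (C * x ^ m)) := by
        gcongr
        exact h _ (Nat.le_floor (by linarith)) _ (by gcongr)
    _ = C ^ ((k : ℝ) / m) * 2 ^ k * A * f (C * x ^ m) := by ring

end Counting

/-- `S₂(X) ≫ X^{1/3}`. -/
theorem S₂_lower_bound :
    ∃ c : ℝ, 0 < c ∧ ∃ X₀ : ℝ, ∀ X : ℝ, X₀ ≤ X → c * X ^ ((1 : ℝ) / 3) ≤ (S₂ X : ℝ) := by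
  have hgrowth (y : ℕ) (hy : 4 ≤ y) (X : ℝ) (hX : 63 * 64 * 420 ^ 6 * (y : ℝ) ^ 600 ≤ X) :
      (y : ℝ) ^ 200 ≤ 4 * 6 ^ 700 * S₂ X := by
    obtain ⟨V, hV, hcard⟩ := exists_admissible_values hy
    have hVS : #V ≤ S₂ X := card_le_S₂ fun d hd =>
      ⟨(hV d hd).1, (hV d hd).2.1.trans hX, (hV d hd).2.2⟩
    exact hcard.trans (by gcongr)
  have hexp : (1 : ℝ) / 3 = (200 : ℕ) / (600 : ℕ) := by norm_num
  rw [hexp]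
  exact exists_mul_rpow_le_of_pow_le (f := fun X => S₂ X) (by positivity) (by positivity)
    (by norm_num) hgrowth
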